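/- Let μ be a T-invariant and shift-ergodic probability measure on X_λ (0 < λ < 1/2), and let (v_k)_{k≥1} be the deterministic asymptotic speeds of tagged k-solitons, v_k = lim_{t→∞} x(γ^t)/t μ-a.s. Then for every k with ρ_k > 0, the speed satisfies v_k ≤ w_0 / ρ_k; in particular each v_k is finite. -/

import Mathlib

open MeasureTheory Filter Finset

/-- A ball configuration: a box at each integer, occupied (`true`) or empty (`false`). -/
abbrev Cfg := ℤ → Bool

/-- Numerical (integer) value of a box. -/
def valZ (b : Bool) : ℤ := if b then 1 else 0

/-- Numerical (real) value of a box. -/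
def valR (b : Bool) : ℝ := if b then 1 else 0

/-- `x` is a record of the configuration `η`:
for every `z ≤ x`, the number of balls in `[z,x]` is strictly smaller than the
number of empty boxes in `[z,x]`. -/
def isRecord (η : Cfg) (x : ℤ) : Prop :=
  ∀ z ≤ x, (∑ y ∈ Finset.Icc z x, valZ (η y)) < ∑ y ∈ Finset.Icc z x, (1 - valZ (η y))

open Classical in
/-- The box-ball (Takahashi–Satsuma) operator `T`. -/
noncomputable def bbsT (η : Cfg) : Cfg := fun x => if isRecord η x then false else !(η x)

/-- `η` has asymptotic density `lam` of balls on both half lines. -/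
def inXlam (lam : ℝ) (η : Cfg) : Prop :=
  Tendsto (fun y : ℕ => (∑ x ∈ Finset.Icc (-(y : ℤ)) 0, valR (η x)) / (y : ℝ))
    atTop (nhds lam) ∧
  Tendsto (fun y : ℕ => (∑ x ∈ Finset.Icc (0 : ℤ) (y : ℤ), valR (η x)) / (y : ℝ))
    atTop (nhds lam)

/-- `η ∈ 𝒳`: it has a well-defined density `0 < lam < 1/2`. -/
def inX (η : Cfg) : Prop := ∃ lam : ℝ, 0 < lam ∧ lam < 1 / 2 ∧ inXlam lam η

/-- `ξ` is a walk lift of the configuration `η`. -/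
def IsLift (η : Cfg) (ξ : ℤ → ℤ) : Prop :=
  ∀ x : ℤ, ξ x - ξ (x - 1) = 2 * valZ (η x) - 1

/-- Running minimum `min_{y ≤ x} ξ(y)` of a walk. -/
noncomputable def runMin (ξ : ℤ → ℤ) (x : ℤ) : ℤ := sInf (ξ '' Set.Iic x)

/-- The box-ball operator on walks: reflection at the running minimum. -/
noncomputable def liftT (ξ : ℤ → ℤ) : ℤ → ℤ := fun x => 2 * runMin ξ x - ξ x

/-- The canonical walk lift of `η` with value `0` at the origin. -/
noncomputable def xi0 (η : Cfg) : ℤ → ℤ := fun x =>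
  if 0 ≤ x then ∑ y ∈ Finset.Icc 1 x, (2 * valZ (η y) - 1)
  else -∑ y ∈ Finset.Icc (x + 1) 0, (2 * valZ (η y) - 1)
/-- Maximal runs of a word of (position, letter) pairs. -/
def runsOf : List (ℤ × Bool) → List (List (ℤ × Bool))
  | [] => []
  | a :: l =>
    match runsOf l with
    | [] => [[a]]
    | r :: rs =>
      if (r.head?.map Prod.snd) = some a.2 then (a :: r) :: rs else [a] :: r :: rs

/-- Takahashi–Satsuma step: find the leftmost run whose length is at least the
length of the run preceding it; the soliton consists of the preceding run
together with the first (that many) letters of the selected run. -/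
def findSoliton : List (List (ℤ × Bool)) → Option (List (ℤ × Bool))
  | r1 :: r2 :: rest =>
    if r1.length ≤ r2.length then some (r1 ++ r2.take r1.length)
    else findSoliton (r2 :: rest)
  | _ => none

/-- Iterated Takahashi–Satsuma algorithm (with fuel): repeatedly identify the
soliton given by `findSoliton` and remove its letters from the word. -/
def tsAux : ℕ → List (ℤ × Bool) → List (List (ℤ × Bool))
  | 0, _ => []
  | fuel + 1, w =>
    match findSoliton (runsOf w) with
    | none => []
    | some s => s :: tsAux fuel (w.filter (fun a => !((s.map Prod.fst).contains a.1)))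

/-- The solitons identified by the Takahashi–Satsuma algorithm in a finite word. -/
def tsSolitons (w : List (ℤ × Bool)) : List (List (ℤ × Bool)) := tsAux w.length w

/-- The word (with positions) strictly between sites `y1` and `y2`. -/
def excursionWord (η : Cfg) (y1 y2 : ℤ) : List (ℤ × Bool) :=
  (List.range (y2 - y1 - 1).toNat).map fun n => (y1 + 1 + n, η (y1 + 1 + n))

/-- `Γ_k η`: the set of `k`-solitons of `η`, each identified with the set of `2k`
sites it occupies.  A `k`-soliton is obtained by applying the Takahashi–Satsuma
algorithm to an excursion of `η` (the word between two consecutive records). -/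
def Gamma (η : Cfg) (k : ℕ) : Set (Finset ℤ) :=
  {γ | ∃ y1 y2 : ℤ, y1 < y2 ∧ isRecord η y1 ∧ isRecord η y2 ∧
    (∀ z : ℤ, y1 < z → z < y2 → ¬ isRecord η z) ∧
    ∃ s ∈ tsSolitons (excursionWord η y1 y2), s.length = 2 * k ∧
      γ = (s.map Prod.fst).toFinset}

/-- The head of a soliton `γ` of `η`: the positions of its ones. -/
def headF (η : Cfg) (γ : Finset ℤ) : Finset ℤ := γ.filter fun x => η x = true

/-- The tail of a soliton `γ` of `η`: the positions of its zeros. -/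
def tailF (η : Cfg) (γ : Finset ℤ) : Finset ℤ := γ.filter fun x => η x = false
/-- `x` is a `k`-slot of `η`: either a record, or the `j`-th smallest site of the
tail or of the head of some soliton, with `j > k` (slot level `j - 1 ≥ k`). -/
def IsKSlot (η : Cfg) (k : ℕ) (x : ℤ) : Prop :=
  isRecord η x ∨ ∃ m : ℕ, ∃ γ ∈ Gamma η m,
    (x ∈ tailF η γ ∧ k < ((tailF η γ).filter fun y => y ≤ x).card) ∨
    (x ∈ headF η γ ∧ k < ((headF η γ).filter fun y => y ≤ x).card)

open Classical in
/-- Increasing enumeration of a (doubly unbounded, locally finite) set `S ⊆ ℤ`,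
normalized so that the `0`-th element is the base point `b`.  (Junk value if no
such enumeration exists.) -/
noncomputable def enumZ (S : Set ℤ) (b : ℤ) : ℤ → ℤ :=
  if h : ∃ f : ℤ → ℤ, StrictMono f ∧ f 0 = b ∧ Set.range f = S then h.choose
  else fun _ => 0

/-- Position `r(ξ,j)` of Record `j` of a walk `ξ`: leftmost site where `ξ` takes
the value `-j`. -/
noncomputable def recPos (ξ : ℤ → ℤ) (j : ℤ) : ℤ := sInf {x : ℤ | ξ x = -j}

/-- `s_k(ξ,i)`: the `i`-th `k`-slot of the configuration `η` lifted by the walk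
`ξ`, enumerated increasingly and normalized by `s_k(ξ,0) = r(ξ,0)`. -/
noncomputable def skEnum (η : Cfg) (ξ : ℤ → ℤ) (k : ℕ) : ℤ → ℤ :=
  enumZ {x : ℤ | IsKSlot η k x} (recPos ξ 0)

/-- `M_k ξ (i)`: the number of `k`-solitons appended to the `i`-th `k`-slot,
i.e. contained in `[s_k(ξ,i)+1, s_k(ξ,i+1)-1]`. -/
noncomputable def Mk (η : Cfg) (ξ : ℤ → ℤ) (k : ℕ) (i : ℤ) : ℕ :=
  Set.ncard {γ | γ ∈ Gamma η k ∧
    ∀ x ∈ γ, skEnum η ξ k i < x ∧ x < skEnum η ξ k (i + 1)}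

open Classical in
/-- The trajectory `γ^t` of a tagged `k`-soliton `γ` of `η`: `γ^0 = γ` and
`γ^{t+1}` is the `k`-soliton of `T^{t+1} η` whose head is the tail of `γ^t`. -/
noncomputable def solTraj (η : Cfg) (k : ℕ) (γ : Finset ℤ) : ℕ → Finset ℤ
  | 0 => γ
  | t + 1 =>
    if h : ∃ γ' ∈ Gamma (bbsT^[t + 1] η) k,
        headF (bbsT^[t + 1] η) γ' = tailF (bbsT^[t] η) (solTraj η k γ t)
    then h.choose else ∅

/-- `J_m^t ξ`: the flow of `m`-solitons through Record `0` by time `t`. -/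
noncomputable def Jflow (η : Cfg) (ξ : ℤ → ℤ) (m : ℕ) (t : ℕ) : ℕ :=
  Set.ncard {γ | γ ∈ Gamma η m ∧ (∀ x ∈ γ, x < recPos ξ 0) ∧
    ∀ x ∈ solTraj η m γ t, recPos (liftT^[t] ξ) 0 ≤ x}

/-- `o_k^t(ξ) = Σ_{m>k} 2(m-k)·J_m^t ξ`: the flow of `k`-slots through Record
`0` by time `t`, counted as the number of pairs (an `m`-soliton `γ` with `m > k`
crossing Record `0` by time `t`, a site of `γ` of slot level `≥ k`); each such
`γ` carries exactly `2(m-k)` such sites. -/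
noncomputable def oOff (η : Cfg) (ξ : ℤ → ℤ) (k : ℕ) (t : ℕ) : ℕ :=
  Set.ncard {p : Finset ℤ × ℤ | ∃ m : ℕ, k < m ∧ p.1 ∈ Gamma η m ∧
    (∀ x ∈ p.1, x < recPos ξ 0) ∧
    (∀ x ∈ solTraj η m p.1 t, recPos (liftT^[t] ξ) 0 ≤ x) ∧
    ((p.2 ∈ tailF η p.1 ∧ k < ((tailF η p.1).filter fun y => y ≤ p.2).card) ∨
     (p.2 ∈ headF η p.1 ∧ k < ((headF η p.1).filter fun y => y ≤ p.2).card))}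

/-- The relabeled `i`-th `k`-slot at time `t`:
`s_k^t(ξ,i) = s_k(T^t ξ, o_k^t(ξ) + i)`. -/
noncomputable def skEnumT (η : Cfg) (ξ : ℤ → ℤ) (k : ℕ) (t : ℕ) (i : ℤ) : ℤ :=
  skEnum (bbsT^[t] η) (liftT^[t] ξ) k ((oOff η ξ k t : ℤ) + i)
/-- The shift `θ` on configurations: `θη(y) = η(y+1)`. -/
def shiftC (η : Cfg) : Cfg := fun y => η (y + 1)

/-- The shift by `n`: `θ^n η (y) = η (y + n)`. -/
def shiftBy (n : ℤ) (η : Cfg) : Cfg := fun y => η (y + n)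

/-- The shift on `ℕ^ℤ` (soliton components). -/
def shiftN (z : ℤ → ℕ) : ℤ → ℕ := fun i => z (i + 1)

/-- `r(η)`: the position of the first record of `η` in `[1,∞)`. -/
noncomputable def rFirst (η : Cfg) : ℤ := sInf {x : ℤ | 1 ≤ x ∧ isRecord η x}

/-- The record-shift `θ̂ η = θ^{r(η)} η`. -/
noncomputable def thetaHat (η : Cfg) : Cfg := shiftBy (rFirst η) η

/-- The dynamics seen from a record, `T̂ η = θ^{ψ_η(0)} (Tη)` where `ψ_η(0)` is
the position of Record `0` of `Tξ` for the canonical lift `ξ = ξ°[η]`. -/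
noncomputable def That (η : Cfg) : Cfg := shiftBy (recPos (liftT (xi0 η)) 0) (bbsT η)

/-- The set `𝒳` of configurations with density in `(0,1/2)`. -/
def Xset : Set Cfg := {η | inX η}

/-- The set `𝒳̂` of configurations in `𝒳` having a record at the origin. -/
def XhatSet : Set Cfg := {η | inX η ∧ isRecord η 0}

/-- The `k`-component of a configuration (seen from its canonical lift `ξ°[η]`,
which for `η ∈ 𝒳̂` has Record `0` at the origin). -/
noncomputable def MkHat (η : Cfg) (k : ℕ) (i : ℤ) : ℕ := Mk η (xi0 η) k i

/-- `μ` is the inverse-Palm measure of `μ̂`: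
`μ(A) = μ̂(r)⁻¹ · ∫ Σ_{i=1}^{r(η)} 1_A(θ^i η) dμ̂`. -/
def PalmIdentity (muhat mu : MeasureTheory.Measure Cfg) : Prop :=
  ∀ A : Set Cfg, MeasurableSet A →
    mu A = (∫⁻ η, ((rFirst η).toNat : ENNReal) ∂muhat)⁻¹ *
      ∫⁻ η, ∑ i ∈ Finset.Icc (1 : ℤ) (rFirst η),
        A.indicator (fun _ => (1 : ENNReal)) (shiftBy i η) ∂muhat

/-- The number of `k`-solitons in the excursion of `η` between Records 0 and 1
(i.e. contained in `(0, r(η))`), for `η` with a record at the origin. -/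
noncomputable def excCount (η : Cfg) (k : ℕ) : ℕ :=
  Set.ncard {γ | γ ∈ Gamma η k ∧ ∀ x ∈ γ, 0 < x ∧ x < rFirst η}

/-- `ρ_k`: the mean number of `k`-solitons per excursion, under
`μ̂ = μ( · | 0 ∈ Rη)`. -/
noncomputable def rhoK (mu : MeasureTheory.Measure Cfg) (k : ℕ) : ℝ :=
  ∫ η, (excCount η k : ℝ) ∂(ProbabilityTheory.cond mu XhatSet)

/-- `w_0 = 1 + Σ_k 2k ρ_k`: the mean excursion length. -/
noncomputable def w0of (mu : MeasureTheory.Measure Cfg) : ℝ :=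
  1 + ∑' k : ℕ, 2 * (k : ℝ) * rhoK mu k

/-- `ρ̄_k = ρ_k / w_0`: the mean number of `k`-solitons per site. -/
noncomputable def rhoBar (mu : MeasureTheory.Measure Cfg) (k : ℕ) : ℝ :=
  rhoK mu k / w0of mu

/-- The leftmost site of a soliton. -/
noncomputable def leftmost (γ : Finset ℤ) : ℤ := sInf (γ : Set ℤ)

/-! ### Takahashi–Satsuma on words -/

/-- Height of a word. -/
def hgt (w : List (ℤ × Bool)) : ℤ := (w.map (fun a => 2 * valZ a.2 - 1)).sum

def Dyck (w : List (ℤ × Bool)) : Prop := ∀ p q, w = p ++ q → 0 ≤ hgt p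

def Alt : Bool → List (List (ℤ × Bool)) → Prop
  | _, [] => True
  | b, r :: rs => r ≠ [] ∧ (∀ a ∈ r, a.2 = b) ∧ Alt (!b) rs

lemma hgt_append (p q : List (ℤ × Bool)) : hgt (p ++ q) = hgt p + hgt q := by
  simp [hgt]

lemma hgt_nil : hgt [] = 0 := rfl

lemma hgt_const (p : List (ℤ × Bool)) (c : Bool) (h : ∀ a ∈ p, a.2 = c) :
    hgt p = (2 * valZ c - 1) * p.length := by
  induction p with
  | nil => simp [hgt]
  | cons a p ih =>
    have h1 := ih (fun x hx => h x (List.mem_cons_of_mem _ hx))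
    have h2 := h a List.mem_cons_self
    have : hgt (a :: p) = (2 * valZ a.2 - 1) + hgt p := by simp [hgt]
    rw [this, h1, h2]
    push_cast [List.length_cons]
    ring

lemma runsOf_flatten (w : List (ℤ × Bool)) : (runsOf w).flatten = w := by
  induction w with
  | nil => simp [runsOf]
  | cons a l ih =>
    rw [runsOf]
    split
    · rename_i h
      rw [h] at ih
      simp at ih
      simp [← ih]
    · rename_i r rs h
      rw [h] at ih
      split_ifs
      · simp at ih ⊢; exact ih
      · simp at ih ⊢; exact ih

lemma runsOf_alt (l : List (ℤ × Bool)) : ∀ a, Alt a.2 (runsOf (a :: l)) := by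
  induction l with
  | nil => intro a; simp [runsOf, Alt]
  | cons c l ih =>
    intro a
    have h := ih c
    rw [runsOf]
    split
    · simp [Alt]
    · rename_i r rs hr
      rw [hr] at h
      obtain ⟨h1, h2, h3⟩ := h
      obtain ⟨x, r', rfl⟩ := List.exists_cons_of_ne_nil h1
      have hx : x.2 = c.2 := h2 x (by simp)
      split_ifs with hh
      · simp at hh
        have hca : c.2 = a.2 := by rw [← hx, hh]
        refine ⟨by simp, ?_, ?_⟩
        · intro y hy
          rcases List.mem_cons.1 hy with rfl | hy
          · rfl
          · rw [h2 y hy, hca]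
        · rw [← hca]; exact h3
      · simp at hh
        have hca : c.2 = !a.2 := by
          rw [hx] at hh
          revert hh; cases c.2 <;> cases a.2 <;> simp
        refine ⟨by simp, by simp, ?_⟩
        rw [← hca]
        exact ⟨by simp, h2, h3⟩

lemma findSoliton_some (rs : List (List (ℤ × Bool))) : ∀ b s, Alt b rs → findSoliton rs = some s →
    ∃ u s1 s2 v c, rs.flatten = u ++ (s1 ++ s2) ++ v ∧ s = s1 ++ s2 ∧ s1.length = s2.length ∧
      0 < s1.length ∧ (∀ a ∈ s1, a.2 = c) ∧ (∀ a ∈ s2, a.2 = !c) ∧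
      ((u = [] ∧ c = b ∧ ∃ rest, rs = s1 :: rest) ∨
        ∃ u1 u2, u = u1 ++ u2 ∧ s1.length < u2.length ∧ ∀ a ∈ u2, a.2 = !c) := by
  induction rs with
  | nil => intro b s _ h; simp [findSoliton] at h
  | cons r1 rs ih =>
    intro b s halt h
    cases rs with
    | nil => simp [findSoliton] at h
    | cons r2 rest =>
      obtain ⟨h1, h2, h3⟩ := halt
      rw [findSoliton] at h
      split_ifs at h with hle
      · simp at h
        obtain ⟨h4, h5, h6⟩ := h3
        refine ⟨[], r1, r2.take r1.length, r2.drop r1.length ++ rest.flatten, b, ?_, h.symm, ?_, ?_, h2, ?_, ?_⟩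
        · simp only [List.flatten_cons, List.nil_append, List.append_assoc]
          rw [← List.append_assoc (List.take _ _), List.take_append_drop]
        · simp [hle]
        · exact List.length_pos_iff.2 h1
        · intro a ha; exact h5 a (List.mem_of_mem_take ha)
        · left; exact ⟨rfl, rfl, _, rfl⟩
      · obtain ⟨u, s1, s2, v, c, e1, e2, e3, e4, e5, e6, e7⟩ := ih (!b) s h3 h
        refine ⟨r1 ++ u, s1, s2, v, c, ?_, e2, e3, e4, e5, e6, ?_⟩
        · rw [List.flatten_cons, e1]; simp
        · right
          rcases e7 with ⟨rfl, rfl, rest', hr⟩ | ⟨u1, u2, rfl, hl, hu⟩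
          · refine ⟨[], r1, by simp, ?_, ?_⟩
            · have : r2 = s1 := by simp at hr; exact hr.1
              rw [← this]; omega
            · simpa using h2
          · exact ⟨r1 ++ u1, u2, by simp, hl, hu⟩

lemma findSoliton_none (rs : List (List (ℤ × Bool))) : ∀ b r, Alt b (r :: rs) →
    findSoliton (r :: rs) = none →
    0 < (2 * valZ b - 1) * hgt (r :: rs).flatten ∧
      (2 * valZ b - 1) * hgt (r :: rs).flatten ≤ r.length := by
  induction rs with
  | nil =>
    intro b r ⟨h1, h2, _⟩ _
    have := hgt_const r b h2
    have hp := List.length_pos_iff.2 h1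
    simp only [List.flatten_cons, List.flatten_nil, List.append_nil, this]
    cases b <;> simp [valZ] <;> omega
  | cons r2 rest ih =>
    intro b r ⟨h1, h2, h3⟩ h
    rw [findSoliton] at h
    split_ifs at h with hle
    have h4 := ih (!b) r2 h3 h
    have := hgt_const r b h2
    rw [List.flatten_cons, hgt_append, this]
    cases b <;> simp [valZ] at h4 ⊢ <;> omega

lemma dyck_head {a : ℤ × Bool} {l : List (ℤ × Bool)} (h : Dyck (a :: l)) : a.2 = true := by
  have := h [a] l rfl
  by_contra hh
  simp at hh
  simp [hgt, hh, valZ] at this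

def Srt (w : List (ℤ × Bool)) : Prop := w.Pairwise (fun a b => a.1 < b.1)

lemma Srt.filter_eq {u s v : List (ℤ × Bool)} (h : Srt (u ++ s ++ v)) :
    (u ++ s ++ v).filter (fun a => !((s.map Prod.fst).contains a.1)) = u ++ v := by
  unfold Srt at h
  rw [List.pairwise_append, List.pairwise_append] at h
  obtain ⟨⟨h1, h2, h3⟩, h4, h5⟩ := h
  rw [List.filter_append, List.filter_append]
  have e1 : u.filter (fun a => !((s.map Prod.fst).contains a.1)) = u := by
    rw [List.filter_eq_self]
    intro a ha
    simp only [Bool.not_eq_true', List.contains_eq_mem, decide_eq_false_iff_not, List.mem_map, not_exists]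
    rintro b ⟨hb, hab⟩
    have := h3 a ha b hb
    omega
  have e2 : v.filter (fun a => !((s.map Prod.fst).contains a.1)) = v := by
    rw [List.filter_eq_self]
    intro a ha
    simp only [Bool.not_eq_true', List.contains_eq_mem, decide_eq_false_iff_not, List.mem_map, not_exists]
    rintro b ⟨hb, hab⟩
    have := h5 b (List.mem_append_right _ hb) a ha
    omega
  have e3 : s.filter (fun a => !((s.map Prod.fst).contains a.1)) = [] := by
    rw [List.filter_eq_nil_iff]
    intro a ha
    simp only [Bool.not_eq_true', List.contains_eq_mem, decide_eq_false_iff_not, List.mem_map, not_not]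
    exact ⟨a, ha, rfl⟩
  rw [e1, e2, e3]; simp

structure IsStep (w s u s1 s2 v : List (ℤ × Bool)) (c : Bool) : Prop where
  hw : w = u ++ (s1 ++ s2) ++ v
  hs : s = s1 ++ s2
  hl : s1.length = s2.length
  hpos : 0 < s1.length
  h1 : ∀ a ∈ s1, a.2 = c
  h2 : ∀ a ∈ s2, a.2 = !c
  hu : (u = [] ∧ c = true) ∨ ∃ u1 u2, u = u1 ++ u2 ∧ s1.length < u2.length ∧ ∀ a ∈ u2, a.2 = !c
  hf : w.filter (fun a => !((s.map Prod.fst).contains a.1)) = u ++ v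

lemma step_spec {w s : List (ℤ × Bool)} (hd : Dyck w) (hs : Srt w)
    (h : findSoliton (runsOf w) = some s) : ∃ u s1 s2 v c, IsStep w s u s1 s2 v c := by
  cases w with
  | nil => simp [runsOf, findSoliton] at h
  | cons a l =>
    have ha := dyck_head hd
    obtain ⟨u, s1, s2, v, c, e1, e2, e3, e4, e5, e6, e7⟩ :=
      findSoliton_some _ _ s (runsOf_alt l a) h
    rw [runsOf_flatten] at e1
    refine ⟨u, s1, s2, v, c, e1, e2, e3, e4, e5, e6, ?_, ?_⟩
    · rcases e7 with ⟨h1, h2, _⟩ | h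
      · left; exact ⟨h1, h2.trans ha⟩
      · right; exact h
    · rw [e2, e1]; rw [e1] at hs; exact hs.filter_eq

lemma IsStep.hgt_s {w s u s1 s2 v : List (ℤ × Bool)} {c : Bool} (h : IsStep w s u s1 s2 v c) :
    hgt (s1 ++ s2) = 0 := by
  rw [hgt_append, hgt_const s1 c h.h1, hgt_const s2 _ h.h2, h.hl]
  cases c <;> simp [valZ]

lemma IsStep.srt {w s u s1 s2 v : List (ℤ × Bool)} {c : Bool} (h : IsStep w s u s1 s2 v c)
    (hs : Srt w) : Srt (u ++ v) := by
  have h1 := h.hf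
  rw [← h1]
  exact List.Pairwise.filter _ hs

lemma IsStep.dyck {w s u s1 s2 v : List (ℤ × Bool)} {c : Bool} (h : IsStep w s u s1 s2 v c)
    (hd : Dyck w) : Dyck (u ++ v) := by
  intro p q hpq
  rcases List.append_eq_append_iff.1 hpq with ⟨a, rfl, hv⟩ | ⟨a, hu, rfl⟩
  · have := hd (u ++ (s1 ++ s2) ++ a) q (by rw [h.hw, hv]; simp)
    have h0 := h.hgt_s
    simp only [hgt_append] at *
    omega
  · apply hd p (a ++ (s1 ++ s2) ++ v)
    rw [h.hw, hu]; simp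

/-- Good gap. -/
def GoodGap (k : ℕ) (p : List (ℤ × Bool)) : Prop :=
  p = [] ∨ ∃ p1 p2 c, p = p1 ++ p2 ∧ k < p2.length ∧ ∀ a ∈ p2, a.2 = c

lemma IsStep.good_new {w s u s1 s2 v : List (ℤ × Bool)} {c : Bool} (h : IsStep w s u s1 s2 v c) :
    GoodGap s1.length u := by
  rcases h.hu with ⟨h, _⟩ | ⟨u1, u2, e, hl, hh⟩
  · left; exact h
  · right; exact ⟨u1, u2, _, e, hl, hh⟩

/-- A monochromatic suffix of `A ++ x :: B`-like words. -/
lemma mono_suffix {A B p1 p2 : List (ℤ × Bool)} {c d : Bool} (h : A ++ B = p1 ++ p2)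
    (hB : ∀ a ∈ B, a.2 = d) (hBne : B ≠ []) (hp : ∀ a ∈ p2, a.2 = c)
    (hA : A = [] ∨ ∃ A' x, A = A' ++ [x] ∧ x.2 = !d) : p2.length ≤ B.length := by
  by_contra hlt
  push Not at hlt
  rcases List.append_eq_append_iff.1 h with ⟨a, _, hb⟩ | ⟨a, ha, hp2⟩
  · rw [hb] at hlt; simp at hlt
  · rw [hp2] at hlt
    have hane : a ≠ [] := by rintro rfl; simp at hlt
    rcases hA with rfl | ⟨A', x, rfl, hx⟩
    · simp at ha; exact hane ha.2
    · have hxa : x ∈ a := by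
        rw [← List.dropLast_append_getLast hane, ← List.append_assoc] at ha
        have := List.append_inj_right' ha (by simp)
        simp at this
        rw [this]; exact List.getLast_mem hane
      have h1 : x.2 = c := hp x (by rw [hp2]; simp [hxa])
      obtain ⟨y, hy⟩ := List.exists_mem_of_ne_nil B hBne
      have h2 : y.2 = c := hp y (by rw [hp2]; simp [hy])
      have h3 := hB y hy
      rw [h1, ← h2, h3] at hx
      cases d <;> simp at hx

lemma last_of_ne {B : List (ℤ × Bool)} (h : B ≠ []) (d : Bool) (hB : ∀ a ∈ B, a.2 = d)
    (A : List (ℤ × Bool)) : ∃ A' x, A ++ B = A' ++ [x] ∧ x.2 = d := by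
  refine ⟨A ++ B.dropLast, B.getLast h, ?_, hB _ (List.getLast_mem h)⟩
  rw [List.append_assoc, List.dropLast_append_getLast]

lemma IsStep.u_last {w s u s1 s2 v : List (ℤ × Bool)} {c : Bool} (h : IsStep w s u s1 s2 v c) :
    u = [] ∨ ∃ A' x, u = A' ++ [x] ∧ x.2 = !c := by
  rcases h.hu with ⟨h, _⟩ | ⟨u1, u2, e, hl, hh⟩
  · left; exact h
  · right
    rw [e]
    exact last_of_ne (by rintro rfl; simp at hl) _ hh u1

lemma IsStep.us1_last {w s u s1 s2 v : List (ℤ × Bool)} {c : Bool} (h : IsStep w s u s1 s2 v c) :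
    u ++ s1 = [] ∨ ∃ A' x, u ++ s1 = A' ++ [x] ∧ x.2 = !(!c) := by
  right
  have hp := h.hpos
  simp only [Bool.not_not]
  exact last_of_ne (by rintro e; simp [e] at hp) _ h.h1 u

lemma IsStep.suffix_le {w s u s1 s2 v : List (ℤ × Bool)} {c : Bool} (h : IsStep w s u s1 s2 v c)
    {a a' p1 p2 : List (ℤ × Bool)} {d : Bool} (ha : s1 ++ s2 = a ++ a') (hne : a ≠ [])
    (hp : u ++ a = p1 ++ p2) (h2 : ∀ x ∈ p2, x.2 = d) : p2.length ≤ s1.length := by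
  have hp0 := h.hpos
  rcases List.append_eq_append_iff.1 ha with ⟨x, rfl, hx⟩ | ⟨x, hx, _⟩
  · by_cases hxe : x = []
    · subst hxe
      exact mono_suffix (A := u) (B := s1) (by simpa using hp) h.h1 (by rintro e; simp [e] at hp0) h2 h.u_last
    · have := mono_suffix (A := u ++ s1) (B := x) (d := !c) (by simpa using hp)
        (fun y hy => h.h2 y (by rw [hx]; simp [hy])) hxe h2 h.us1_last
      have hl := h.hl
      rw [hx] at hl
      simp at hl
      omega
  · have := mono_suffix (A := u) (B := a) (d := c) hp
        (fun y hy => h.h1 y (by rw [hx]; simp [hy])) hne h2 h.u_last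
    rw [hx]; simp; omega

lemma IsStep.gap {w s u s1 s2 v : List (ℤ × Bool)} {c : Bool} (h : IsStep w s u s1 s2 v c)
    (hd : Dyck w) {p q : List (ℤ × Bool)} {k : ℕ} (hpq : w = p ++ q) (hg : GoodGap k p) :
    (s1.length ≤ k → (∀ a ∈ s, a ∈ p) ∨ (∀ a ∈ s, a ∈ q)) ∧
    ∃ p' q', u ++ v = p' ++ q' ∧ GoodGap k p' ∧ (∀ a ∈ p', a ∈ p) ∧ (∀ a ∈ q', a ∈ q) := by
  have e : u ++ ((s1 ++ s2) ++ v) = p ++ q := by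
    rw [← hpq, h.hw]; simp
  have hs := h.hs
  rcases List.append_eq_append_iff.1 e with ⟨a, rfl, hq⟩ | ⟨a, rfl, hq⟩
  · by_cases ha0 : a = []
    · subst ha0
      simp at hq hg
      refine ⟨fun _ => Or.inr ?_, u, v, rfl, hg, by simp, ?_⟩
      · rw [hs, ← hq]; intro x hx; simp at hx ⊢; tauto
      · rw [← hq]; intro x hx; simp [hx]
    rcases List.append_eq_append_iff.1 hq with ⟨a', rfl, hv⟩ | ⟨a', hss, rfl⟩
    · by_cases ha' : a' = []
      · subst ha'
        have hlt : k < s1.length := by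
          rcases hg with hg | ⟨p1, p2, d, e1, e2, e3⟩
          · simp at hg ha0; tauto
          · have := h.suffix_le (a := s1 ++ s2) (a' := []) (by simp) (by simpa using ha0) (by simpa using e1) e3
            omega
        refine ⟨fun hle => by omega, u, v, rfl, ?_, by simp; tauto, by simp [hv]⟩
        rcases h.good_new with hn | ⟨p1, p2, d, e1, e2, e3⟩
        · left; exact hn
        · right; exact ⟨p1, p2, d, e1, by omega, e3⟩
      · refine ⟨fun _ => Or.inl ?_, u ++ a', q, by rw [hv]; simp, ?_, ?_, by simp⟩
        · rw [hs]; intro x hx; simp at hx ⊢; tauto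
        · rcases hg with hg | ⟨p1, p2, d, e1, e2, e3⟩
          · simp at hg ha0; tauto
          · have e1' : (u ++ (s1 ++ s2)) ++ a' = p1 ++ p2 := by rw [← e1]; simp
            rcases List.append_eq_append_iff.1 e1' with ⟨x, hx, rfl⟩ | ⟨x, hx, rfl⟩
            · right; exact ⟨u ++ x, p2, d, by simp, e2, e3⟩
            · have hxl : x.length ≤ s1.length := by
                by_cases hx0 : x = []
                · simp [hx0]
                · exact h.suffix_le (a := s1 ++ s2) (a' := []) (by simp) (by
                    intro hh; have := h.hpos; simp at hh; simp [hh.1] at this) hx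
                    (fun y hy => e3 y (by simp [hy]))
              by_cases hx0 : x = []
              · subst hx0
                right; exact ⟨u, a', d, rfl, by simpa using e2, by simpa using e3⟩
              have hdc : d = !c := by
                obtain ⟨A', y, hy, hy2⟩ := last_of_ne (B := s2) (by
                  rintro e; have h1 := h.hpos; have h2 := h.hl; simp [e] at h2; simp [h2] at h1) _ h.h2 (u ++ s1)
                obtain ⟨A'', z, hz, hz2⟩ := last_of_ne hx0 d (fun y hy => e3 y (by simp [hy])) p1
                have : A' ++ [y] = A'' ++ [z] := by rw [← hy, ← hz, ← hx]; simp
                have := List.append_inj_right' this rfl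
                simp at this
                rw [← hz2, ← hy2, this]
              rcases h.hu with ⟨hu, hc⟩ | ⟨u1, u2, hu, hul, huc⟩
              · exfalso
                obtain ⟨b, a'', rfl⟩ := List.exists_cons_of_ne_nil ha'
                have := hd (s1 ++ s2 ++ [b]) (a'' ++ q) (by rw [h.hw, hu, hv]; simp)
                rw [hgt_append, h.hgt_s] at this
                have hb : b.2 = d := e3 b (by simp)
                rw [hdc, hc] at hb
                simp [hgt, hb, valZ] at this
              · right
                refine ⟨u1, u2 ++ a', d, by rw [hu]; simp, ?_, ?_⟩
                · simp at e2 ⊢; omega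
                · intro y hy
                  rcases List.mem_append.1 hy with hy | hy
                  · rw [hdc]; exact huc y hy
                  · exact e3 y (by simp [hy])
        · intro x hx; simp at hx ⊢; tauto
    · have hlt : k < s1.length := by
        rcases hg with hg | ⟨p1, p2, d, e1, e2, e3⟩
        · simp at hg; tauto
        · have := h.suffix_le hss ha0 e1 e3
          omega
      refine ⟨fun hle => by omega, u, v, rfl, ?_, by simp; tauto, by simp; tauto⟩
      rcases h.good_new with hn | ⟨p1, p2, d, e1, e2, e3⟩
      · left; exact hn
      · right; exact ⟨p1, p2, d, e1, by omega, e3⟩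
  · refine ⟨fun _ => Or.inr ?_, p, a ++ v, by simp, hg, by simp, ?_⟩
    · rw [hs, hq]; intro x hx; simp at hx ⊢; tauto
    · rw [hq]; intro x hx; simp at hx ⊢; tauto

lemma tsAux_succ (n : ℕ) (w : List (ℤ × Bool)) : tsAux (n + 1) w =
    match findSoliton (runsOf w) with
    | none => []
    | some s => s :: tsAux n (w.filter (fun a => !((s.map Prod.fst).contains a.1))) := rfl

/-- Induction principle for the algorithm. -/
lemma ts_cases (n : ℕ) {w : List (ℤ × Bool)} (hd : Dyck w) (hs : Srt w) :
    (tsAux (n + 1) w = [] ∧ findSoliton (runsOf w) = none) ∨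
    ∃ s u s1 s2 v c, IsStep w s u s1 s2 v c ∧ tsAux (n + 1) w = s :: tsAux n (u ++ v) := by
  rcases hf : findSoliton (runsOf w) with _ | s
  · left; rw [tsAux_succ, hf]; simp
  · right
    obtain ⟨u, s1, s2, v, c, h⟩ := step_spec hd hs hf
    refine ⟨s, u, s1, s2, v, c, h, ?_⟩
    rw [tsAux_succ, hf]
    simp only [h.hf]

lemma ts_gap (n : ℕ) : ∀ {w p q : List (ℤ × Bool)} {k : ℕ}, Dyck w → Srt w → w = p ++ q → GoodGap k p →
    ∀ s ∈ tsAux n w, s.length ≤ 2 * k → (∀ a ∈ s, a ∈ p) ∨ (∀ a ∈ s, a ∈ q) := by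
  induction n with
  | zero => intro w p q k _ _ _ _ s hs; simp [tsAux] at hs
  | succ n ih =>
    intro w p q k hd hs hpq hg s hsm hl
    rcases ts_cases n hd hs with ⟨h, _⟩ | ⟨s', u, s1, s2, v, c, h, he⟩
    · rw [h] at hsm; simp at hsm
    · obtain ⟨g1, p', q', g2, g3, g4, g5⟩ := h.gap hd hpq hg
      rw [he] at hsm
      rcases List.mem_cons.1 hsm with rfl | hsm
      · apply g1
        have := h.hl
        rw [h.hs] at hl
        simp at hl
        omega
      · rcases ih (h.dyck hd) (h.srt hs) g2 g3 s hsm hl with h1 | h1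
        · left; intro a ha; exact g4 a (h1 a ha)
        · right; intro a ha; exact g5 a (h1 a ha)

structure SolShape (w s : List (ℤ × Bool)) : Prop where
  sub : ∀ a ∈ s, a ∈ w
  srt : Srt s
  shape : ∃ s1 s2 c, s = s1 ++ s2 ∧ s1.length = s2.length ∧ 0 < s1.length ∧
    (∀ a ∈ s1, a.2 = c) ∧ (∀ a ∈ s2, a.2 = !c)

lemma IsStep.solShape {w s u s1 s2 v : List (ℤ × Bool)} {c : Bool} (h : IsStep w s u s1 s2 v c)
    (hs : Srt w) : SolShape w s := by
  refine ⟨?_, ?_, s1, s2, c, h.hs, h.hl, h.hpos, h.h1, h.h2⟩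
  · intro a ha; rw [h.hs] at ha; rw [h.hw]; simp at ha ⊢; tauto
  · have h1 := h.hw
    rw [← h.hs] at h1
    unfold Srt at *
    rw [h1, List.pairwise_append, List.pairwise_append] at hs
    exact hs.1.2.1

lemma IsStep.sub {w s u s1 s2 v : List (ℤ × Bool)} {c : Bool} (h : IsStep w s u s1 s2 v c) :
    ∀ a ∈ u ++ v, a ∈ w := by
  intro a ha; rw [h.hw]; simp at ha ⊢; tauto

lemma ts_shape (n : ℕ) : ∀ {w : List (ℤ × Bool)}, Dyck w → Srt w → ∀ s ∈ tsAux n w, SolShape w s := by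
  induction n with
  | zero => intro w _ _ s hs; simp [tsAux] at hs
  | succ n ih =>
    intro w hd hs s hsm
    rcases ts_cases n hd hs with ⟨h, _⟩ | ⟨s', u, s1, s2, v, c, h, he⟩
    · rw [h] at hsm; simp at hsm
    · rw [he] at hsm
      rcases List.mem_cons.1 hsm with rfl | hsm
      · exact h.solShape hs
      · have := ih (h.dyck hd) (h.srt hs) s hsm
        exact ⟨fun a ha => h.sub a (this.sub a ha), this.srt, this.shape⟩

/-- The first word lies entirely on one side of the second. -/
def SepPos (s s' : List (ℤ × Bool)) : Prop :=
  (∀ a ∈ s, ∀ b ∈ s', a.1 < b.1) ∨ (∀ a ∈ s, ∀ b ∈ s', b.1 < a.1)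

def DisjPos (s s' : List (ℤ × Bool)) : Prop := ∀ a ∈ s, ∀ b ∈ s', a.1 ≠ b.1

lemma ts_pairwise (n : ℕ) : ∀ {w : List (ℤ × Bool)}, Dyck w → Srt w →
    (tsAux n w).Pairwise (fun s s' => DisjPos s s' ∧ (s.length = s'.length → SepPos s s')) := by
  induction n with
  | zero => intro w _ _; simp [tsAux]
  | succ n ih =>
    intro w hd hs
    rcases ts_cases n hd hs with ⟨h, _⟩ | ⟨s, u, s1, s2, v, c, h, he⟩
    · rw [h]; exact List.Pairwise.nil
    · rw [he, List.pairwise_cons]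
      refine ⟨fun s' hs' => ?_, ih (h.dyck hd) (h.srt hs)⟩
      have h1 := h.hw
      rw [← h.hs] at h1
      have hsw := hs
      unfold Srt at hsw
      rw [h1, List.pairwise_append, List.pairwise_append] at hsw
      obtain ⟨⟨_, _, h3⟩, _, h5⟩ := hsw
      refine ⟨?_, ?_⟩
      · intro a ha b hb
        have hbw := (ts_shape n (h.dyck hd) (h.srt hs) s' hs').sub b hb
        rcases List.mem_append.1 hbw with hb' | hb'
        · have := h3 b hb' a ha; omega
        · have := h5 a (by simp [ha]) b hb'; omega
      · intro hl
        rcases ts_gap n (h.dyck hd) (h.srt hs) rfl h.good_new s' hs' (by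
          rw [← hl, h.hs]; have := h.hl; simp; omega) with hh | hh
        · right; intro a ha b hb; exact h3 b (hh b hb) a ha
        · left; intro a ha b hb; exact h5 a (by simp [ha]) b (hh b hb)

lemma ts_cover (n : ℕ) : ∀ {w : List (ℤ × Bool)}, Dyck w → Srt w → hgt w = 0 → w.length ≤ n →
    ∀ a ∈ w, ∃ s ∈ tsAux n w, a ∈ s := by
  induction n with
  | zero => intro w _ _ _ hl a ha; simp at hl; simp [hl] at ha
  | succ n ih =>
    intro w hd hs h0 hl a ha
    rcases ts_cases n hd hs with ⟨_, h⟩ | ⟨s, u, s1, s2, v, c, h, he⟩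
    · exfalso
      obtain ⟨b, l, rfl⟩ := List.exists_cons_of_ne_nil (List.ne_nil_of_mem ha)
      have halt := runsOf_alt l b
      have hfl := runsOf_flatten (b :: l)
      rcases hr : runsOf (b :: l) with _ | ⟨r, rs⟩
      · rw [hr] at hfl; simp at hfl
      · rw [hr] at halt h hfl
        have := (findSoliton_none rs _ r halt h).1
        rw [hfl, h0] at this
        simp at this
    · rw [he]
      by_cases has : a ∈ s
      · exact ⟨s, by simp, has⟩
      · have hw := h.hw
        rw [← h.hs] at hw
        have ha' : a ∈ u ++ v := by rw [hw] at ha; simp at ha ⊢; tauto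
        have h00 : hgt (u ++ v) = 0 := by
          have h2 := h.hgt_s
          rw [h.hw] at h0
          simp only [hgt_append] at *
          omega
        obtain ⟨s', hs', ha2⟩ := ih (h.dyck hd) (h.srt hs) h00 (by
          have := h.hpos
          rw [h.hw] at hl; simp at hl ⊢; omega) a ha'
        exact ⟨s', by simp [hs'], ha2⟩

/-! ### Equivariance of the algorithm -/

def mvP (c : ℤ) (a : ℤ × Bool) : ℤ × Bool := (a.1 + c, a.2)

lemma runsOf_map (c : ℤ) (w : List (ℤ × Bool)) :
    runsOf (w.map (mvP c)) = (runsOf w).map (List.map (mvP c)) := by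
  induction w with
  | nil => simp [runsOf]
  | cons a l ih =>
    rw [List.map_cons, runsOf, runsOf, ih]
    rcases runsOf l with _ | ⟨r, rs⟩
    · simp
    · have : (List.head? (List.map (mvP c) r)).map Prod.snd = (List.head? r).map Prod.snd := by
        cases r <;> simp [mvP]
      simp only [List.map_cons, this]
      have h2 : (mvP c a).2 = a.2 := rfl
      rw [h2]
      split_ifs <;> simp

lemma findSoliton_map (c : ℤ) (rs : List (List (ℤ × Bool))) :
    findSoliton (rs.map (List.map (mvP c))) = (findSoliton rs).map (List.map (mvP c)) := by
  induction rs with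
  | nil => simp [findSoliton]
  | cons r1 rs ih =>
    cases rs with
    | nil => simp [findSoliton]
    | cons r2 rest =>
      simp only [List.map_cons] at ih ⊢
      rw [findSoliton, findSoliton]
      simp only [List.length_map]
      split_ifs
      · simp [List.map_take]
      · exact ih

lemma tsAux_map (c : ℤ) (n : ℕ) : ∀ w : List (ℤ × Bool),
    tsAux n (w.map (mvP c)) = (tsAux n w).map (List.map (mvP c)) := by
  induction n with
  | zero => intro w; simp [tsAux]
  | succ n ih =>
    intro w
    rw [tsAux_succ, tsAux_succ, runsOf_map, findSoliton_map]
    rcases findSoliton (runsOf w) with _ | s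
    · simp
    · simp only [Option.map_some, List.map_cons]
      rw [← ih]
      congr 2
      rw [List.filter_map]
      congr 1
      apply List.filter_congr
      intro a _
      simp [mvP]

lemma tsSolitons_map (c : ℤ) (w : List (ℤ × Bool)) :
    tsSolitons (w.map (mvP c)) = (tsSolitons w).map (List.map (mvP c)) := by
  rw [tsSolitons, tsSolitons, List.length_map, tsAux_map]

/-! ### Walks and records -/

lemma xi0_lift (η : Cfg) (x : ℤ) : xi0 η x - xi0 η (x - 1) = 2 * valZ (η x) - 1 := by
  unfold xi0
  rcases lt_trichotomy x 0 with h | h | h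
  · rw [if_neg (by omega), if_neg (by omega)]
    have : Finset.Icc (x - 1 + 1) 0 = insert x (Finset.Icc (x + 1) 0) := by
      ext y; simp; omega
    rw [this, Finset.sum_insert (by simp)]
    ring
  · subst h
    simp
  · rw [if_pos (by omega), if_pos (by omega)]
    have : Finset.Icc 1 x = insert x (Finset.Icc 1 (x - 1)) := by
      ext y; simp; omega
    rw [this, Finset.sum_insert (by simp)]
    ring

lemma xi0_sum (η : Cfg) (z : ℤ) (n : ℕ) :
    ∑ y ∈ Finset.Icc z (z + n - 1), (2 * valZ (η y) - 1) = xi0 η (z + n - 1) - xi0 η (z - 1) := by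
  induction n with
  | zero => simp
  | succ n ih =>
    have : Finset.Icc z (z + (n + 1 : ℕ) - 1) = insert (z + n) (Finset.Icc z (z + n - 1)) := by
      ext y; simp; omega
    rw [this, Finset.sum_insert (by simp), ih]
    have := xi0_lift η (z + n)
    push_cast
    rw [show z + ((n : ℤ) + 1) - 1 = z + n by ring]
    linarith

lemma xi0_sum' (η : Cfg) {z x : ℤ} (h : z ≤ x + 1) :
    ∑ y ∈ Finset.Icc z x, (2 * valZ (η y) - 1) = xi0 η x - xi0 η (z - 1) := by
  have := xi0_sum η z (x + 1 - z).toNat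
  have e : z + ((x + 1 - z).toNat : ℤ) - 1 = x := by omega
  rwa [e] at this

lemma isRecord_iff (η : Cfg) (x : ℤ) : isRecord η x ↔ ∀ y < x, xi0 η x < xi0 η y := by
  have key : ∀ z ≤ x, ((∑ y ∈ Finset.Icc z x, valZ (η y)) < ∑ y ∈ Finset.Icc z x, (1 - valZ (η y)))
      ↔ xi0 η x < xi0 η (z - 1) := by
    intro z hz
    have h := xi0_sum' η (z := z) (x := x) (by omega)
    have h2 : ∑ y ∈ Finset.Icc z x, (2 * valZ (η y) - 1) =
      ∑ y ∈ Finset.Icc z x, valZ (η y) - ∑ y ∈ Finset.Icc z x, (1 - valZ (η y)) := by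
      rw [← Finset.sum_sub_distrib]; apply Finset.sum_congr rfl; intros; ring
    constructor <;> intro h3 <;> linarith
  constructor
  · intro h y hy
    have := (key (y + 1) (by omega)).1 (h (y + 1) (by omega))
    simpa using this
  · intro h z hz
    exact (key z hz).2 (h (z - 1) (by omega))

/-- Consecutive records. -/
def Consec (η : Cfg) (y1 y2 : ℤ) : Prop := y1 < y2 ∧ isRecord η y1 ∧ isRecord η y2 ∧
    (∀ z : ℤ, y1 < z → z < y2 → ¬ isRecord η z)

lemma valZ_cases (b : Bool) : valZ b = 0 ∨ valZ b = 1 := by cases b <;> simp [valZ]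

lemma Consec.ge {η : Cfg} {y1 y2 : ℤ} (h : Consec η y1 y2) : ∀ n : ℕ, y1 + n < y2 →
    xi0 η y1 ≤ xi0 η (y1 + n) := by
  intro n
  induction n using Nat.strong_induction_on with
  | _ n ih =>
    intro hn
    by_contra hlt
    push Not at hlt
    have hn0 : n ≠ 0 := by rintro rfl; simp at hlt
    apply h.2.2.2 (y1 + n) (by omega) hn
    rw [isRecord_iff]
    intro y hy
    rcases lt_or_ge y y1 with h1 | h1
    · have := (isRecord_iff _ _).1 h.2.1 y h1
      linarith
    · have := ih (y - y1).toNat (by omega) (by omega)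
      rw [show y1 + ((y - y1).toNat : ℤ) = y by omega] at this
      linarith

lemma Consec.last {η : Cfg} {y1 y2 : ℤ} (h : Consec η y1 y2) :
    xi0 η (y2 - 1) = xi0 η y1 := by
  have h1 := h.1
  have h2 := h.ge (y2 - 1 - y1).toNat (by omega)
  rw [show y1 + ((y2 - 1 - y1).toNat : ℤ) = y2 - 1 by omega] at h2
  have h3 := (isRecord_iff _ _).1 h.2.2.1 y1 h1
  have h4 := xi0_lift η y2
  rcases valZ_cases (η y2) with h5 | h5 <;> rw [h5] at h4 <;> omega

lemma word_take (η : Cfg) (y1 : ℤ) (n : ℕ) :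
    hgt ((List.range n).map fun i : ℕ => (y1 + 1 + (i : ℤ), η (y1 + 1 + i))) =
      xi0 η (y1 + n) - xi0 η y1 := by
  induction n with
  | zero => simp [hgt]
  | succ n ih =>
    rw [List.range_succ, List.map_append, hgt_append, ih]
    have := xi0_lift η (y1 + 1 + n)
    simp [hgt]
    rw [show y1 + ((n : ℤ) + 1) = y1 + 1 + n by ring]
    rw [show y1 + 1 + (n : ℤ) - 1 = y1 + n by ring] at this
    linarith

lemma excursionWord_eq (η : Cfg) (y1 y2 : ℤ) : excursionWord η y1 y2 =
    (List.range (y2 - y1 - 1).toNat).map fun i : ℕ => (y1 + 1 + (i : ℤ), η (y1 + 1 + i)) := by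
  unfold excursionWord
  simp [List.map_eq_flatMap, List.flatMap_assoc]

lemma mem_pos {s : List (ℤ × Bool)} {x : ℤ} :
    x ∈ (s.map Prod.fst).toFinset ↔ ∃ b, (x, b) ∈ s := by
  rw [List.mem_toFinset, List.mem_map]
  constructor
  · rintro ⟨a, ha, rfl⟩; exact ⟨a.2, ha⟩
  · rintro ⟨b, hb⟩; exact ⟨_, hb, rfl⟩

lemma mem_word {η : Cfg} {y1 y2 : ℤ} (a : ℤ × Bool) :
    a ∈ excursionWord η y1 y2 ↔ y1 < a.1 ∧ a.1 < y2 ∧ a.2 = η a.1 := by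
  rw [excursionWord_eq]
  simp only [List.mem_map, List.mem_range]
  constructor
  · rintro ⟨n, hn, rfl⟩
    simp; omega
  · rintro ⟨h1, h2, h3⟩
    refine ⟨(a.1 - y1 - 1).toNat, by omega, ?_⟩
    have e : y1 + 1 + ((a.1 - y1 - 1).toNat : ℤ) = a.1 := by omega
    rw [e, ← h3]

lemma word_srt (η : Cfg) (y1 y2 : ℤ) : Srt (excursionWord η y1 y2) := by
  unfold Srt
  rw [excursionWord_eq]
  rw [List.pairwise_map]
  apply List.Pairwise.imp _ List.pairwise_lt_range
  intro a b hab
  simpa using hab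

lemma Consec.dyck {η : Cfg} {y1 y2 : ℤ} (h : Consec η y1 y2) : Dyck (excursionWord η y1 y2) := by
  intro p q hpq
  have hl : p.length ≤ (y2 - y1 - 1).toNat := by
    have := congrArg List.length hpq
    simp [excursionWord_eq] at this
    omega
  have hp : p = (List.range p.length).map fun i : ℕ => (y1 + 1 + (i : ℤ), η (y1 + 1 + i)) := by
    have h1 : p = (excursionWord η y1 y2).take p.length := by rw [hpq]; simp
    rw [excursionWord_eq, ← List.map_take, List.take_range, min_eq_left hl] at h1
    exact h1
  rw [hp, word_take]
  have h0 := h.1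
  have := h.ge p.length (by omega)
  linarith

lemma Consec.bal {η : Cfg} {y1 y2 : ℤ} (h : Consec η y1 y2) : hgt (excursionWord η y1 y2) = 0 := by
  rw [excursionWord_eq, word_take]
  have h0 := h.1
  rw [show y1 + ((y2 - y1 - 1).toNat : ℤ) = y2 - 1 by omega, h.last]
  ring

lemma Consec.eq_or {η : Cfg} {y1 y2 z1 z2 : ℤ} (h : Consec η y1 y2) (h' : Consec η z1 z2) :
    (y1 = z1 ∧ y2 = z2) ∨ y2 ≤ z1 ∨ z2 ≤ y1 := by
  obtain ⟨a1, a2, a3, a4⟩ := h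
  obtain ⟨b1, b2, b3, b4⟩ := h'
  have c1 := a4 z1
  have c2 := a4 z2
  have c3 := b4 y1
  have c4 := b4 y2
  by_contra hc
  push Not at hc
  rcases lt_trichotomy y1 z1 with h | h | h
  · exact c1 h hc.2.1 b2
  · rcases lt_trichotomy y2 z2 with h2 | h2 | h2
    · exact c4 (by omega) h2 a3
    · exact hc.1 h h2
    · exact c2 (by omega) h2 b3
  · exact c3 h hc.2.2 a2

/-! ### Solitons -/

structure SolData (η : Cfg) (k : ℕ) (γ : Finset ℤ) (y1 y2 : ℤ) (s : List (ℤ × Bool)) : Prop where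
  con : Consec η y1 y2
  mem : s ∈ tsSolitons (excursionWord η y1 y2)
  len : s.length = 2 * k
  eq : γ = (s.map Prod.fst).toFinset

lemma Gamma_data {η : Cfg} {k : ℕ} {γ : Finset ℤ} (h : γ ∈ Gamma η k) :
    ∃ y1 y2 s, SolData η k γ y1 y2 s := by
  obtain ⟨y1, y2, h1, h2, h3, h4, s, h5, h6, h7⟩ := h
  exact ⟨y1, y2, s, ⟨h1, h2, h3, h4⟩, h5, h6, h7⟩

lemma SolData.shape {η : Cfg} {k : ℕ} {γ : Finset ℤ} {y1 y2 : ℤ} {s : List (ℤ × Bool)}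
    (h : SolData η k γ y1 y2 s) : SolShape (excursionWord η y1 y2) s :=
  ts_shape _ h.con.dyck (word_srt _ _ _) s h.mem

lemma SolData.range {η : Cfg} {k : ℕ} {γ : Finset ℤ} {y1 y2 : ℤ} {s : List (ℤ × Bool)}
    (h : SolData η k γ y1 y2 s) {x : ℤ} (hx : x ∈ γ) : y1 < x ∧ x < y2 := by
  rw [h.eq] at hx
  obtain ⟨b, hb⟩ := mem_pos.1 hx
  have := (mem_word _).1 (h.shape.sub _ hb)
  exact ⟨this.1, this.2.1⟩

lemma Srt.nodup {s : List (ℤ × Bool)} (h : Srt s) : (s.map Prod.fst).Nodup := by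
  unfold Srt at h
  rw [List.Nodup, List.pairwise_map]
  exact h.imp (fun h => ne_of_lt h)

lemma Gamma_card {η : Cfg} {k : ℕ} {γ : Finset ℤ} (h : γ ∈ Gamma η k) : γ.card = 2 * k := by
  obtain ⟨y1, y2, s, h⟩ := Gamma_data h
  rw [h.eq, List.toFinset_card_of_nodup h.shape.srt.nodup, List.length_map, h.len]

lemma Gamma_mem_cases {η : Cfg} {k : ℕ} {γ : Finset ℤ} (h : γ ∈ Gamma η k) (c : Bool) :
    ∃ x ∈ γ, η x = c := by
  obtain ⟨y1, y2, s, h⟩ := Gamma_data h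
  obtain ⟨s1, s2, d, e1, e2, e3, e4, e5⟩ := h.shape.shape
  have key : ∀ a ∈ s, a.1 ∈ γ ∧ η a.1 = a.2 := by
    intro a ha
    refine ⟨by rw [h.eq]; exact mem_pos.2 ⟨a.2, ha⟩, ((mem_word _).1 (h.shape.sub _ ha)).2.2.symm⟩
  by_cases hcd : c = d
  · obtain ⟨a, ha⟩ := List.exists_mem_of_length_pos e3
    have := key a (by rw [e1]; simp [ha])
    exact ⟨a.1, this.1, by rw [this.2, e4 a ha, hcd]⟩
  · obtain ⟨a, ha⟩ := List.exists_mem_of_length_pos (e2 ▸ e3)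
    have := key a (by rw [e1]; simp [ha])
    exact ⟨a.1, this.1, by rw [this.2, e5 a ha]; cases c <;> cases d <;> simp_all⟩

lemma head_nonempty {η : Cfg} {k : ℕ} {γ : Finset ℤ} (h : γ ∈ Gamma η k) : (headF η γ).Nonempty := by
  obtain ⟨x, hx, h2⟩ := Gamma_mem_cases h true
  exact ⟨x, by simp [headF, hx, h2]⟩

lemma tail_nonempty {η : Cfg} {k : ℕ} {γ : Finset ℤ} (h : γ ∈ Gamma η k) : (tailF η γ).Nonempty := by
  obtain ⟨x, hx, h2⟩ := Gamma_mem_cases h false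
  exact ⟨x, by simp [tailF, hx, h2]⟩

lemma Gamma_two {η : Cfg} {k k' : ℕ} {γ γ' : Finset ℤ} (h : γ ∈ Gamma η k) (h' : γ' ∈ Gamma η k') :
    (γ = γ' ∧ k = k') ∨ (Disjoint γ γ' ∧
      (k = k' → (∀ x ∈ γ, ∀ y ∈ γ', x < y) ∨ (∀ x ∈ γ, ∀ y ∈ γ', y < x))) := by
  obtain ⟨y1, y2, s, hd⟩ := Gamma_data h
  obtain ⟨z1, z2, s', hd'⟩ := Gamma_data h'
  rcases hd.con.eq_or hd'.con with ⟨rfl, rfl⟩ | hle | hle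
  · by_cases hss : s = s'
    · left
      refine ⟨by rw [hd.eq, hd'.eq, hss], ?_⟩
      have h1 := hd.len
      have h2 := hd'.len
      rw [hss] at h1
      omega
    · right
      have hpw := ts_pairwise (excursionWord η y1 y2).length hd.con.dyck (word_srt _ _ _)
      have hsym : Std.Symm (fun s s' : List (ℤ × Bool) =>
          DisjPos s s' ∧ (s.length = s'.length → SepPos s s')) := by
        constructor
        rintro a b ⟨h1, h2⟩
        refine ⟨fun x hx y hy => (h1 y hy x hx).symm, fun hl => ?_⟩
        rcases h2 hl.symm with h | h
        · right; intro x hx y hy; exact h y hy x hx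
        · left; intro x hx y hy; exact h y hy x hx
      have hR := List.Pairwise.forall hpw hd.mem hd'.mem hss
      refine ⟨?_, ?_⟩
      · rw [Finset.disjoint_left]
        intro x hx hx'
        rw [hd.eq] at hx
        rw [hd'.eq] at hx'
        obtain ⟨b, hb⟩ := mem_pos.1 hx
        obtain ⟨b', hb'⟩ := mem_pos.1 hx'
        exact hR.1 _ hb _ hb' rfl
      · intro hk
        have := hR.2 (by rw [hd.len, hd'.len, hk])
        rcases this with hh | hh
        · left
          intro x hx y hy
          rw [hd.eq] at hx
          rw [hd'.eq] at hy
          obtain ⟨b, hb⟩ := mem_pos.1 hx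
          obtain ⟨b', hb'⟩ := mem_pos.1 hy
          exact hh _ hb _ hb'
        · right
          intro x hx y hy
          rw [hd.eq] at hx
          rw [hd'.eq] at hy
          obtain ⟨b, hb⟩ := mem_pos.1 hx
          obtain ⟨b', hb'⟩ := mem_pos.1 hy
          exact hh _ hb _ hb'
  · right
    have : ∀ x ∈ γ, ∀ y ∈ γ', x < y := by
      intro x hx y hy
      have := hd.range hx
      have := hd'.range hy
      omega
    refine ⟨?_, fun _ => Or.inl this⟩
    rw [Finset.disjoint_left]
    intro x hx hx'
    exact lt_irrefl _ (this x hx x hx')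
  · right
    have : ∀ x ∈ γ, ∀ y ∈ γ', y < x := by
      intro x hx y hy
      have := hd.range hx
      have := hd'.range hy
      omega
    refine ⟨?_, fun _ => Or.inr this⟩
    rw [Finset.disjoint_left]
    intro x hx hx'
    exact lt_irrefl _ (this x hx x hx')

lemma Gamma_eq_of_mem {η : Cfg} {k k' : ℕ} {γ γ' : Finset ℤ} (h : γ ∈ Gamma η k) (h' : γ' ∈ Gamma η k')
    {x : ℤ} (hx : x ∈ γ) (hx' : x ∈ γ') : γ = γ' ∧ k = k' := by
  rcases Gamma_two h h' with h | ⟨h, _⟩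
  · exact h
  · exact absurd hx' (Finset.disjoint_left.1 h hx)

/-- Straddling uniqueness. -/
lemma Gamma_straddle {η : Cfg} {k : ℕ} {γ γ' : Finset ℤ} (h : γ ∈ Gamma η k) (h' : γ' ∈ Gamma η k)
    {a b a' b' : ℤ} (ha : a ∈ γ) (hb : b ∈ γ) (ha' : a' ∈ γ') (hb' : b' ∈ γ')
    (h1 : a < 0) (h2 : 0 ≤ b) (h3 : a' < 0) (h4 : 0 ≤ b') : γ = γ' := by
  rcases Gamma_two h h' with h | ⟨_, h⟩
  · exact h.1
  · rcases h rfl with h | h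
    · have := h b hb a' ha'; omega
    · have := h a ha b' hb'; omega

lemma Gamma_cover {η : Cfg} {y1 y2 x : ℤ} (h : Consec η y1 y2) (h1 : y1 < x) (h2 : x < y2) :
    ∃ k, ∃ γ ∈ Gamma η k, x ∈ γ := by
  obtain ⟨s, hs, hx⟩ := ts_cover _ h.dyck (word_srt _ _ _) h.bal le_rfl (x, η x)
    ((mem_word _).2 ⟨h1, h2, rfl⟩)
  obtain ⟨s1, s2, c, e1, e2, e3, _⟩ := (ts_shape _ h.dyck (word_srt _ _ _) s hs).shape
  refine ⟨s1.length, _, ⟨y1, y2, h.1, h.2.1, h.2.2.1, h.2.2.2, s, hs, ?_, rfl⟩, ?_⟩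
  · rw [e1]; simp; omega
  · exact mem_pos.2 ⟨_, hx⟩

/-! ### Shift equivariance -/

def tr (n : ℤ) (γ : Finset ℤ) : Finset ℤ := γ.image (fun x => x + n)

lemma mem_tr {n : ℤ} {γ : Finset ℤ} {x : ℤ} : x ∈ tr n γ ↔ x - n ∈ γ := by
  simp only [tr, Finset.mem_image]
  constructor
  · rintro ⟨y, hy, rfl⟩; simpa using hy
  · intro h; exact ⟨x - n, h, by ring⟩

lemma tr_tr (n : ℤ) (γ : Finset ℤ) : tr n (tr (-n) γ) = γ := by
  ext x; simp [mem_tr]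

lemma tr_tr' (n : ℤ) (γ : Finset ℤ) : tr (-n) (tr n γ) = γ := by
  ext x; simp [mem_tr]

lemma tr_inj {n : ℤ} {γ γ' : Finset ℤ} (h : tr n γ = tr n γ') : γ = γ' := by
  rw [← tr_tr' n γ, h, tr_tr']

lemma tr_empty (n : ℤ) : tr n ∅ = ∅ := by simp [tr]

lemma leftmost_mem {γ : Finset ℤ} (h : γ.Nonempty) : leftmost γ ∈ γ := by
  have := Int.csInf_mem (s := (γ : Set ℤ)) (by exact_mod_cast h) γ.bddBelow
  exact_mod_cast this

lemma leftmost_le {γ : Finset ℤ} {x : ℤ} (h : x ∈ γ) : leftmost γ ≤ x :=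
  csInf_le γ.bddBelow (by exact_mod_cast h)

lemma leftmost_empty : leftmost ∅ = 0 := by simp [leftmost]

lemma leftmost_tr {γ : Finset ℤ} (h : γ.Nonempty) (n : ℤ) : leftmost (tr n γ) = leftmost γ + n := by
  have h' : (tr n γ).Nonempty := h.image _
  apply le_antisymm
  · exact leftmost_le (mem_tr.2 (by simpa using leftmost_mem h))
  · have := leftmost_le (mem_tr.1 (leftmost_mem h'))
    omega

lemma shiftBy_shiftBy (n : ℤ) (η : Cfg) : shiftBy (-n) (shiftBy n η) = η := by
  funext x; simp [shiftBy]

lemma isRecord_shift (n : ℤ) (η : Cfg) (x : ℤ) : isRecord (shiftBy n η) x ↔ isRecord η (x + n) := by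
  have key : ∀ (f : ℤ → ℤ) (z : ℤ), ∑ y ∈ Finset.Icc z x, f (y + n) =
      ∑ y ∈ Finset.Icc (z + n) (x + n), f y := by
    intro f z
    rw [← Finset.image_add_right_Icc, Finset.sum_image (by intro a _ b _ h; simpa using h)]
  unfold isRecord shiftBy
  constructor
  · intro h z hz
    have := h (z - n) (by omega)
    rw [key (fun y => valZ (η y)), key (fun y => 1 - valZ (η y))] at this
    simpa using this
  · intro h z hz
    rw [key (fun y => valZ (η y)), key (fun y => 1 - valZ (η y))]
    exact h (z + n) (by omega)

lemma bbsT_shift (n : ℤ) (η : Cfg) : bbsT (shiftBy n η) = shiftBy n (bbsT η) := by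
  funext x
  have h := isRecord_shift n η x
  by_cases hr : isRecord η (x + n)
  · have h2 := h.2 hr
    simp [bbsT, hr, h2, shiftBy]
  · have h2 : ¬ isRecord (shiftBy n η) x := fun hh => hr (h.1 hh)
    simp [bbsT, hr, h2, shiftBy]

lemma bbsT_iter_shift (n : ℤ) (t : ℕ) (η : Cfg) :
    bbsT^[t] (shiftBy n η) = shiftBy n (bbsT^[t] η) := by
  induction t with
  | zero => rfl
  | succ t ih => rw [Function.iterate_succ_apply', Function.iterate_succ_apply', ih, bbsT_shift]

lemma word_shift (n : ℤ) (η : Cfg) (y1 y2 : ℤ) :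
    excursionWord η (y1 + n) (y2 + n) = (excursionWord (shiftBy n η) y1 y2).map (mvP n) := by
  rw [excursionWord_eq, excursionWord_eq, List.map_map]
  rw [show y2 + n - (y1 + n) - 1 = y2 - y1 - 1 by ring]
  apply List.map_congr_left
  intro i _
  simp only [mvP, shiftBy, Function.comp, Prod.mk.injEq]
  refine ⟨by ring, ?_⟩
  congr 1; ring

lemma Consec_shift {n : ℤ} {η : Cfg} {y1 y2 : ℤ} (h : Consec (shiftBy n η) y1 y2) :
    Consec η (y1 + n) (y2 + n) := by
  obtain ⟨h1, h2, h3, h4⟩ := h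
  refine ⟨by omega, (isRecord_shift _ _ _).1 h2, (isRecord_shift _ _ _).1 h3, ?_⟩
  intro z hz hz' hr
  refine h4 (z - n) (by omega) (by omega) ((isRecord_shift _ _ _).2 (by simpa using hr))

lemma Gamma_shift_aux {n : ℤ} {η : Cfg} {k : ℕ} {γ : Finset ℤ} (h : γ ∈ Gamma (shiftBy n η) k) :
    tr n γ ∈ Gamma η k := by
  obtain ⟨y1, y2, s, h⟩ := Gamma_data h
  obtain ⟨c1, c2, c3, c4⟩ := Consec_shift h.con
  refine ⟨y1 + n, y2 + n, c1, c2, c3, c4, s.map (mvP n), ?_, ?_, ?_⟩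
  · rw [word_shift, tsSolitons_map]
    exact List.mem_map_of_mem h.mem
  · rw [List.length_map, h.len]
  · ext x
    rw [mem_tr, h.eq, mem_pos, mem_pos]
    constructor
    · rintro ⟨b, hb⟩
      exact ⟨b, List.mem_map.2 ⟨_, hb, by simp [mvP]⟩⟩
    · rintro ⟨b, hb⟩
      obtain ⟨a, ha, e⟩ := List.mem_map.1 hb
      simp [mvP] at e
      refine ⟨b, ?_⟩
      convert ha using 1
      ext <;> simp [← e.1, ← e.2]

lemma Gamma_shift {n : ℤ} {η : Cfg} {k : ℕ} {γ : Finset ℤ} :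
    γ ∈ Gamma (shiftBy n η) k ↔ tr n γ ∈ Gamma η k := by
  refine ⟨Gamma_shift_aux, fun h => ?_⟩
  rw [← shiftBy_shiftBy n η] at h
  have := Gamma_shift_aux h
  rwa [tr_tr'] at this

lemma mem_headF {η : Cfg} {γ : Finset ℤ} {x : ℤ} : x ∈ headF η γ ↔ x ∈ γ ∧ η x = true := by
  simp [headF]

lemma mem_tailF {η : Cfg} {γ : Finset ℤ} {x : ℤ} : x ∈ tailF η γ ↔ x ∈ γ ∧ η x = false := by
  simp [tailF]

lemma headF_tr (n : ℤ) (η : Cfg) (γ : Finset ℤ) : headF η (tr n γ) = tr n (headF (shiftBy n η) γ) := by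
  ext x; rw [mem_headF, mem_tr, mem_tr, mem_headF]; simp [shiftBy]

lemma tailF_tr (n : ℤ) (η : Cfg) (γ : Finset ℤ) : tailF η (tr n γ) = tr n (tailF (shiftBy n η) γ) := by
  ext x; rw [mem_tailF, mem_tr, mem_tr, mem_tailF]; simp [shiftBy]

/-! ### Trajectories -/

lemma Gamma_nonempty {η : Cfg} {k : ℕ} {γ : Finset ℤ} (h : γ ∈ Gamma η k) : γ.Nonempty := by
  obtain ⟨x, hx, _⟩ := Gamma_mem_cases h true
  exact ⟨x, hx⟩

lemma Gamma_head_inj {η : Cfg} {k : ℕ} {γ γ' : Finset ℤ} (h : γ ∈ Gamma η k) (h' : γ' ∈ Gamma η k)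
    (he : headF η γ = headF η γ') : γ = γ' := by
  obtain ⟨x, hx⟩ := head_nonempty h
  have hx' := hx
  rw [he] at hx'
  simp [headF] at hx hx'
  exact (Gamma_eq_of_mem h h' hx.1 hx'.1).1

lemma Gamma_tail_inj {η : Cfg} {k : ℕ} {γ γ' : Finset ℤ} (h : γ ∈ Gamma η k) (h' : γ' ∈ Gamma η k)
    (he : tailF η γ = tailF η γ') : γ = γ' := by
  obtain ⟨x, hx⟩ := tail_nonempty h
  have hx' := hx
  rw [he] at hx'
  simp [tailF] at hx hx'
  exact (Gamma_eq_of_mem h h' hx.1 hx'.1).1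

/-- One step of the trajectory. -/
def NextSol (η : Cfg) (k t : ℕ) (δ γ' : Finset ℤ) : Prop :=
  γ' ∈ Gamma (bbsT^[t + 1] η) k ∧ headF (bbsT^[t + 1] η) γ' = tailF (bbsT^[t] η) δ

lemma solTraj_next {η : Cfg} {k : ℕ} {γ : Finset ℤ} {t : ℕ} {γ' : Finset ℤ}
    (h : NextSol η k t (solTraj η k γ t) γ') : solTraj η k γ (t + 1) = γ' := by
  have hex : ∃ γ' ∈ Gamma (bbsT^[t + 1] η) k,
        headF (bbsT^[t + 1] η) γ' = tailF (bbsT^[t] η) (solTraj η k γ t) := ⟨γ', h.1, h.2⟩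
  rw [solTraj, dif_pos hex]
  have := hex.choose_spec
  exact Gamma_head_inj this.1 h.1 (this.2.trans h.2.symm)

lemma solTraj_none {η : Cfg} {k : ℕ} {γ : Finset ℤ} {t : ℕ}
    (h : ∀ γ', ¬ NextSol η k t (solTraj η k γ t) γ') : solTraj η k γ (t + 1) = ∅ := by
  rw [solTraj, dif_neg]
  rintro ⟨γ', h1, h2⟩
  exact h γ' ⟨h1, h2⟩

lemma solTraj_iff {η : Cfg} {k : ℕ} {γ : Finset ℤ} {t : ℕ} {γ' : Finset ℤ} :
    solTraj η k γ (t + 1) = γ' ↔ ∃ δ, solTraj η k γ t = δ ∧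
      (NextSol η k t δ γ' ∨ (γ' = ∅ ∧ ∀ γ'', ¬ NextSol η k t δ γ'')) := by
  constructor
  · rintro rfl
    refine ⟨_, rfl, ?_⟩
    by_cases h : ∃ γ', NextSol η k t (solTraj η k γ t) γ'
    · obtain ⟨γ', h⟩ := h
      left; rw [solTraj_next h]; exact h
    · push Not at h
      right; exact ⟨solTraj_none h, h⟩
  · rintro ⟨δ, rfl, h | ⟨rfl, h⟩⟩
    · exact solTraj_next h
    · exact solTraj_none h

lemma NextSol_tr {n : ℤ} {η : Cfg} {k t : ℕ} {δ γ' : Finset ℤ} :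
    NextSol (shiftBy n η) k t δ γ' ↔ NextSol η k t (tr n δ) (tr n γ') := by
  unfold NextSol
  rw [bbsT_iter_shift, bbsT_iter_shift, Gamma_shift, headF_tr, tailF_tr]
  constructor
  · rintro ⟨h1, h2⟩; exact ⟨h1, by rw [h2]⟩
  · rintro ⟨h1, h2⟩; exact ⟨h1, tr_inj h2⟩

lemma solTraj_tr (n : ℤ) (η : Cfg) (k : ℕ) (γ : Finset ℤ) (t : ℕ) :
    solTraj η k (tr n γ) t = tr n (solTraj (shiftBy n η) k γ t) := by
  induction t with
  | zero => rfl
  | succ t ih =>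
    rw [solTraj_iff]
    refine ⟨_, rfl, ?_⟩
    obtain ⟨δ, rfl, h⟩ := solTraj_iff.1 (rfl : solTraj (shiftBy n η) k γ (t + 1) = _)
    rcases h with h | ⟨h1, h⟩
    · left; rw [ih]; exact NextSol_tr.1 h
    · right
      refine ⟨by rw [h1, tr_empty], fun γ'' hn => ?_⟩
      apply h (tr (-n) γ'')
      rw [NextSol_tr, tr_tr, ← ih]
      exact hn

/-- either alive or empty -/
lemma solTraj_alive {η : Cfg} {k : ℕ} {γ : Finset ℤ} (h : γ ∈ Gamma η k) (t : ℕ) :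
    solTraj η k γ t ∈ Gamma (bbsT^[t] η) k ∨ solTraj η k γ t = ∅ := by
  cases t with
  | zero => left; exact h
  | succ t =>
    obtain ⟨δ, rfl, h⟩ := solTraj_iff.1 (rfl : solTraj η k γ (t + 1) = _)
    rcases h with h | h
    · left; exact h.1
    · right; exact h.1

lemma solTraj_dead {η : Cfg} {k : ℕ} {γ : Finset ℤ} {t : ℕ} (h : solTraj η k γ t = ∅) :
    ∀ n, solTraj η k γ (t + n) = ∅ := by
  intro n
  induction n with
  | zero => exact h
  | succ n ih =>
    apply solTraj_none (t := t + n)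
    rintro γ' ⟨h1, h2⟩
    rw [ih] at h2
    have := head_nonempty h1
    rw [h2] at this
    simp [tailF] at this

/-- If the limiting speed is nonzero, the trajectory never dies. -/
lemma solTraj_mem {η : Cfg} {k : ℕ} {γ : Finset ℤ} (h : γ ∈ Gamma η k) {v : ℝ} (hv : v ≠ 0)
    (hlim : Tendsto (fun t : ℕ => (leftmost (solTraj η k γ t) : ℝ) / (t : ℝ)) atTop (nhds v))
    (t : ℕ) : solTraj η k γ t ∈ Gamma (bbsT^[t] η) k := by
  rcases solTraj_alive h t with h | h
  · exact h
  · exfalso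
    have hd := solTraj_dead h
    apply hv
    refine tendsto_nhds_unique hlim ?_
    apply tendsto_const_nhds.congr'
    filter_upwards [eventually_ge_atTop t] with m hm
    have := hd (m - t)
    rw [Nat.add_sub_cancel' hm] at this
    rw [this, leftmost_empty]; simp

lemma solTraj_nextSol {η : Cfg} {k : ℕ} {γ : Finset ℤ} {t : ℕ}
    (h : solTraj η k γ (t + 1) ∈ Gamma (bbsT^[t + 1] η) k) :
    NextSol η k t (solTraj η k γ t) (solTraj η k γ (t + 1)) := by
  obtain ⟨δ, rfl, h'⟩ := solTraj_iff.1 (rfl : solTraj η k γ (t + 1) = _)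
  rcases h' with h' | h'
  · exact h'
  · rw [h'.1] at h
    have := Gamma_nonempty h
    simp at this

lemma solTraj_inj {η : Cfg} {k : ℕ} {γ γ' : Finset ℤ} 
    (h : ∀ t, solTraj η k γ t ∈ Gamma (bbsT^[t] η) k)
    (h' : ∀ t, solTraj η k γ' t ∈ Gamma (bbsT^[t] η) k) (t : ℕ)
    (he : solTraj η k γ t = solTraj η k γ' t) : γ = γ' := by
  induction t with
  | zero => exact he
  | succ t ih =>
    apply ih
    have h1 := (solTraj_nextSol (h (t + 1))).2
    have h2 := (solTraj_nextSol (h' (t + 1))).2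
    rw [he] at h1
    exact Gamma_tail_inj (h t) (h' t) (h1.symm.trans h2)

/-- Straddling time. -/
lemma exists_straddle {η : Cfg} {k : ℕ} {γ : Finset ℤ}
    (h : ∀ t, solTraj η k γ t ∈ Gamma (bbsT^[t] η) k) (h0 : leftmost γ < 0) {N : ℕ}
    (hN : 0 ≤ leftmost (solTraj η k γ N)) :
    ∃ t < N, ∃ a ∈ solTraj η k γ t, ∃ b ∈ solTraj η k γ t, a < 0 ∧ 0 ≤ b := by
  by_contra hc
  push Not at hc
  have key : ∀ t ≤ N, leftmost (solTraj η k γ t) < 0 := by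
    intro t
    induction t with
    | zero => intro _; exact h0
    | succ t ih =>
      intro ht
      have h1 := ih (by omega)
      obtain ⟨x, hx⟩ := tail_nonempty (h t)
      have hx0 : x ∈ solTraj η k γ t := (Finset.mem_filter.1 hx).1
      have h2 := hc t (by omega) _ (leftmost_mem (Gamma_nonempty (h t))) x hx0 h1
      rw [← (solTraj_nextSol (h (t + 1))).2] at hx
      exact lt_of_le_of_lt (leftmost_le (Finset.mem_filter.1 hx).1) h2
  have := key N le_rfl
  omega

/-- At most `N` solitons can cross the origin by time `N`. -/
lemma count_le {η : Cfg} {k N : ℕ}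
    (hall : ∀ γ ∈ Gamma η k, ∀ t, solTraj η k γ t ∈ Gamma (bbsT^[t] η) k) (X : Finset ℤ)
    (hX : ∀ x ∈ X, x < 0 ∧ ∃ γ ∈ Gamma η k, leftmost γ = x ∧ 0 ≤ leftmost (solTraj η k γ N)) :
    X.card ≤ N := by
  have h1 : ∀ x : ℤ, ∃ (γ : Finset ℤ) (t : ℕ), x ∈ X → γ ∈ Gamma η k ∧ leftmost γ = x ∧ t < N ∧
      ∃ a ∈ solTraj η k γ t, ∃ b ∈ solTraj η k γ t, a < 0 ∧ 0 ≤ b := by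
    intro x
    by_cases hx : x ∈ X
    · obtain ⟨h0, γ, hγ, hl, hN⟩ := hX x hx
      obtain ⟨t, ht, h⟩ := exists_straddle (hall γ hγ) (by omega) hN
      exact ⟨γ, t, fun _ => ⟨hγ, hl, ht, h⟩⟩
    · exact ⟨∅, 0, fun h => absurd h hx⟩
  choose g f hgf using h1
  have := Finset.card_le_card_of_injOn (s := X) (t := Finset.range N) f
    (fun x hx => by simpa using (hgf x hx).2.2.1) (by
      intro x hx y hy hxy
      obtain ⟨a1, a2, a3, a, ha, b, hb, ha0, hb0⟩ := hgf x hx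
      obtain ⟨b1, b2, b3, a', ha', b', hb', ha0', hb0'⟩ := hgf y hy
      rw [← hxy] at ha' hb'
      have e := Gamma_straddle (hall _ a1 (f x)) (hall _ b1 (f x)) ha hb ha' hb' ha0 hb0 ha0' hb0'
      have := solTraj_inj (hall _ a1) (hall _ b1) _ e
      rw [← a2, ← b2, this])
  simpa using this

/-! ### Measurability -/

lemma meas_coord (x : ℤ) : Measurable (fun η : Cfg => η x) := measurable_pi_apply x

lemma meas_valZ (x : ℤ) : Measurable (fun η : Cfg => valZ (η x)) :=
  (measurable_of_countable valZ).comp (meas_coord x)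

lemma meas_valR (x : ℤ) : Measurable (fun η : Cfg => valR (η x)) :=
  (measurable_of_countable valR).comp (meas_coord x)

lemma meas_record (x : ℤ) : MeasurableSet {η : Cfg | isRecord η x} := by
  have : {η : Cfg | isRecord η x} = ⋂ z : ℤ, ⋂ _ : z ≤ x,
      {η : Cfg | (∑ y ∈ Finset.Icc z x, valZ (η y)) < ∑ y ∈ Finset.Icc z x, (1 - valZ (η y))} := by
    ext η; simp [isRecord]
  rw [this]
  refine MeasurableSet.iInter fun z => MeasurableSet.iInter fun _ => measurableSet_lt ?_ ?_
  · exact Finset.measurable_sum _ fun y _ => meas_valZ y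
  · exact Finset.measurable_sum _ fun y _ => measurable_const.sub (meas_valZ y)

lemma meas_bbsT : Measurable bbsT := by
  refine measurable_pi_lambda _ fun x => ?_
  unfold bbsT
  exact Measurable.ite (meas_record x) measurable_const
    ((measurable_of_countable (fun b : Bool => !b)).comp (meas_coord x))

lemma meas_bbsT_iter (t : ℕ) : Measurable (bbsT^[t]) := meas_bbsT.iterate t

lemma meas_shiftBy (n : ℤ) : Measurable (shiftBy n) :=
  measurable_pi_lambda _ fun x => meas_coord (x + n)

lemma mE {α ι : Type*} [MeasurableSpace α] [Countable ι] {p : ι → α → Prop}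
    (h : ∀ i, MeasurableSet {a | p i a}) : MeasurableSet {a | ∃ i, p i a} := by
  rw [show {a | ∃ i, p i a} = ⋃ i, {a | p i a} by ext a; simp]
  exact MeasurableSet.iUnion h

lemma mA {α ι : Type*} [MeasurableSpace α] [Countable ι] {p : ι → α → Prop}
    (h : ∀ i, MeasurableSet {a | p i a}) : MeasurableSet {a | ∀ i, p i a} := by
  rw [show {a | ∀ i, p i a} = ⋂ i, {a | p i a} by ext a; simp]
  exact MeasurableSet.iInter h

lemma mAnd {α : Type*} [MeasurableSpace α] {p q : α → Prop}
    (h : MeasurableSet {a | p a}) (h' : MeasurableSet {a | q a}) :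
    MeasurableSet {a | p a ∧ q a} := h.inter h'

lemma mOr {α : Type*} [MeasurableSpace α] {p q : α → Prop}
    (h : MeasurableSet {a | p a}) (h' : MeasurableSet {a | q a}) :
    MeasurableSet {a | p a ∨ q a} := h.union h'

lemma mNot {α : Type*} [MeasurableSpace α] {p : α → Prop}
    (h : MeasurableSet {a | p a}) : MeasurableSet {a | ¬ p a} := h.compl

lemma mC {α : Type*} [MeasurableSpace α] {p : Prop} : MeasurableSet {_a : α | p} :=
  MeasurableSet.const p

def mkW (y : ℤ) (n : ℕ) (f : Fin n → Bool) : List (ℤ × Bool) :=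
  List.ofFn (fun i : Fin n => (y + 1 + (((i : Fin n) : ℕ) : ℤ), f i))

lemma word_eq_ofFn (η : Cfg) (y1 y2 : ℤ) :
    excursionWord η y1 y2 = mkW y1 (y2 - y1 - 1).toNat (fun j => η (y1 + 1 + ((j : ℕ) : ℤ))) := by
  rw [excursionWord_eq, mkW]
  apply List.ext_getElem <;> simp

lemma meas_word (y1 y2 : ℤ) (P : List (ℤ × Bool) → Prop) :
    MeasurableSet {η : Cfg | P (excursionWord η y1 y2)} := by
  have hm : Measurable (fun η : Cfg => fun j : Fin (y2 - y1 - 1).toNat =>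
      η (y1 + 1 + ((j : ℕ) : ℤ))) :=
    measurable_pi_lambda _ fun j => meas_coord _
  have : {η : Cfg | P (excursionWord η y1 y2)} =
      (fun η : Cfg => fun j : Fin (y2 - y1 - 1).toNat => η (y1 + 1 + ((j : ℕ) : ℤ))) ⁻¹'
      {f | P (mkW y1 _ f)} := by
    ext η
    rw [Set.mem_preimage]
    show P _ ↔ P _
    rw [word_eq_ofFn]
  rw [this]
  exact hm (Set.to_countable _).measurableSet

lemma meas_Gamma (k : ℕ) (γ : Finset ℤ) : MeasurableSet {η : Cfg | γ ∈ Gamma η k} := by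
  refine mE fun y1 => mE fun y2 => mAnd mC (mAnd (meas_record _) (mAnd (meas_record _)
    (mAnd (mA fun z => ?_) (meas_word y1 y2 (fun w => ∃ s ∈ tsSolitons w, s.length = 2 * k ∧
      γ = (s.map Prod.fst).toFinset)))))
  by_cases h1 : y1 < z <;> by_cases h2 : z < y2 <;> simp only [h1, h2, true_imp_iff, false_imp_iff]
  · exact mNot (meas_record z)
  all_goals exact mC

lemma meas_head_tail (γ δ : Finset ℤ) (t : ℕ) :
    MeasurableSet {η : Cfg | headF (bbsT^[t+1] η) γ = tailF (bbsT^[t] η) δ} := by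
  have : {η : Cfg | headF (bbsT^[t+1] η) γ = tailF (bbsT^[t] η) δ} =
      {η : Cfg | ∀ x : ℤ, (x ∈ γ ∧ (bbsT^[t+1] η) x = true) ↔ (x ∈ δ ∧ (bbsT^[t] η) x = false)} := by
    ext η
    show headF _ γ = tailF _ δ ↔ ∀ x, _
    rw [Finset.ext_iff]
    simp only [mem_headF, mem_tailF]
  rw [this]
  refine mA fun x => ?_
  have hm : Measurable (fun η : Cfg => ((bbsT^[t+1] η) x, (bbsT^[t] η) x)) :=
    ((meas_coord x).comp (meas_bbsT_iter (t+1))).prodMk ((meas_coord x).comp (meas_bbsT_iter t))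
  exact hm (Set.to_countable {p : Bool × Bool | (x ∈ γ ∧ p.1 = true) ↔ (x ∈ δ ∧ p.2 = false)}).measurableSet

lemma meas_NextSol (k t : ℕ) (δ γ : Finset ℤ) : MeasurableSet {η : Cfg | NextSol η k t δ γ} :=
  mAnd (meas_bbsT_iter (t+1) (meas_Gamma k γ)) (meas_head_tail γ δ t)

lemma meas_traj (k t : ℕ) (γ γ' : Finset ℤ) :
    MeasurableSet {η : Cfg | solTraj η k γ t = γ'} := by
  induction t generalizing γ' with
  | zero => exact mC (p := γ = γ')
  | succ t ih =>
    simp only [solTraj_iff]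
    exact mE fun δ => mAnd (ih δ) (mOr (meas_NextSol k t δ γ')
      (mAnd mC (mA fun γ'' => mNot (meas_NextSol k t δ γ''))))

lemma meas_inXlam (lam : ℝ) : MeasurableSet {η : Cfg | inXlam lam η} := by
  refine mAnd ?_ ?_
  · exact measurableSet_tendsto (nhds lam) fun y =>
      (Finset.measurable_sum _ fun x _ => meas_valR x).div_const _
  · exact measurableSet_tendsto (nhds lam) fun y =>
      (Finset.measurable_sum _ fun x _ => meas_valR x).div_const _

/-! ### Invariance -/

lemma mp_shift (mu : Measure Cfg) (h : MeasurePreserving shiftC mu mu) (n : ℤ) :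
    MeasurePreserving (shiftBy n) mu mu := by
  have hpos : ∀ n : ℕ, MeasurePreserving (shiftBy (n : ℤ)) mu mu := by
    intro n
    induction n with
    | zero =>
      convert MeasurePreserving.id mu using 1
      funext η x; simp [shiftBy]
    | succ n ih =>
      convert h.comp ih using 1
      funext η x
      simp only [shiftBy, shiftC, Function.comp]
      congr 1; push_cast; ring
  have hs : ∀ n : ℤ, shiftBy (-n) ∘ shiftBy n = id := by
    intro n; funext η; exact shiftBy_shiftBy n η
  rcases Int.le_total 0 n with h0 | h0
  · obtain ⟨m, rfl⟩ := Int.eq_ofNat_of_zero_le h0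
    exact hpos m
  · obtain ⟨m, hm⟩ := Int.eq_ofNat_of_zero_le (show 0 ≤ -n by omega)
    have h1 := hpos m
    obtain rfl : n = -m := by omega
    refine ⟨meas_shiftBy _, ?_⟩
    conv_lhs => rw [← h1.map_eq]
    rw [Measure.map_map (meas_shiftBy _) (meas_shiftBy _), hs, Measure.map_id]

/-! ### Consequences of the density assumption -/

lemma valZ_cast (b : Bool) : ((valZ b : ℤ) : ℝ) = valR b := by cases b <;> simp [valZ, valR]

/-- a configuration whose walk goes to minus infinity on the right and plus infinity on the left -/
def GoodC (η : Cfg) : Prop := (∀ L : ℤ, ∃ x, xi0 η x ≤ L) ∧ ∀ L : ℤ, ∃ b, ∀ x ≤ b, L < xi0 η x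

lemma good_of_density {lam : ℝ} (h1 : lam < 1/2) {η : Cfg} (h : inXlam lam η) : GoodC η := by
  obtain ⟨hl, hr⟩ := h
  have hc : 2 * lam - 1 < 0 := by linarith
  constructor
  · intro L
    have h2 : Tendsto (fun y : ℕ => ((xi0 η y : ℤ) : ℝ)) atTop atBot := by
      have h3 : ∀ᶠ y : ℕ in atTop, ((xi0 η y : ℤ) : ℝ) ≤
          (y : ℝ) * (2 * ((∑ x ∈ Finset.Icc (0 : ℤ) (y : ℤ), valR (η x)) / (y : ℝ)) - 1) := by
        filter_upwards [eventually_gt_atTop 0] with y hy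
        have hy' : (0:ℝ) < y := by exact_mod_cast hy
        have e := xi0_sum' η (z := 1) (x := y) (by omega)
        have e0 : xi0 η (1 - 1) = 0 := by simp [xi0]
        rw [e0, sub_zero] at e
        rw [← e]
        have : (0:ℤ) ≤ y := by omega
        rw [← Finset.insert_Icc_add_one_left_eq_Icc this, Finset.sum_insert (by simp)]
        have hv : 0 ≤ valR (η 0) := by unfold valR; split <;> norm_num
        push_cast
        rw [Finset.sum_sub_distrib, ← Finset.mul_sum]
        simp only [valZ_cast]
        simp
        field_simp
        nlinarith
      refine tendsto_atBot_mono' _ h3 ?_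
      exact Tendsto.atTop_mul_neg hc tendsto_natCast_atTop_atTop ((hr.const_mul 2).sub_const 1)
    obtain ⟨y, hy⟩ := (h2.eventually (eventually_le_atBot (L : ℝ))).exists
    exact ⟨y, by exact_mod_cast hy⟩
  · intro L
    have h2 : Tendsto (fun y : ℕ => ((xi0 η (-(y:ℤ) - 1) : ℤ) : ℝ)) atTop atTop := by
      have h3 : ∀ᶠ y : ℕ in atTop, 
          (y : ℝ) * (1 - 2 * ((∑ x ∈ Finset.Icc (-(y : ℤ)) 0, valR (η x)) / (y : ℝ)))
            ≤ ((xi0 η (-(y:ℤ) - 1) : ℤ) : ℝ) := by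
        filter_upwards [eventually_gt_atTop 0] with y hy
        have hy' : (0:ℝ) < y := by exact_mod_cast hy
        have e := xi0_sum' η (z := -(y:ℤ)) (x := 0) (by omega)
        have e0 : xi0 η 0 = 0 := by simp [xi0]
        rw [e0, zero_sub] at e
        rw [← neg_eq_iff_eq_neg] at e
        rw [← e]
        push_cast
        rw [Finset.sum_sub_distrib, ← Finset.mul_sum]
        simp only [valZ_cast]
        simp
        field_simp
        have : ((1 + (y:ℤ)).toNat : ℝ) = y + 1 := by
          rw [show (1 + (y:ℤ)).toNat = y + 1 by omega]; push_cast; rfl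
        linarith
      refine tendsto_atTop_mono' _ h3 ?_
      exact Tendsto.atTop_mul_pos (C := 1 - 2 * lam) (by linarith) tendsto_natCast_atTop_atTop
        ((hl.const_mul 2).const_sub 1)
    obtain ⟨n, hn⟩ := eventually_atTop.1 (h2.eventually (eventually_gt_atTop (L : ℝ)))
    refine ⟨-n - 1, fun x hx => ?_⟩
    have := hn (-x - 1).toNat (by omega)
    rw [show -(((-x-1).toNat : ℕ) : ℤ) - 1 = x by omega] at this
    exact_mod_cast this

lemma good_exists_le {η : Cfg} (h : GoodC η) (x : ℤ) : ∃ y ≤ x, isRecord η y := by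
  obtain ⟨b, hb⟩ := h.2 (xi0 η x)
  have hbx : b < x := by
    by_contra hh
    exact lt_irrefl _ (hb x (by omega))
  -- minimal site with height at most that of x
  obtain ⟨y, hy, hmin⟩ := Int.exists_least_of_bdd (P := fun y => xi0 η y ≤ xi0 η x)
    ⟨b, fun z hz => by by_contra hh; exact absurd (hb z (by omega)) (by omega)⟩ ⟨x, le_rfl⟩
  refine ⟨y, hmin x le_rfl, (isRecord_iff η y).2 fun z hz => ?_⟩
  by_contra hh
  have := hmin z (by omega)
  omega

lemma good_exists_ge {η : Cfg} (h : GoodC η) (x : ℤ) : ∃ y, x < y ∧ isRecord η y := by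
  -- a level below everything up to x
  obtain ⟨b, hb⟩ := h.2 (xi0 η x)
  obtain ⟨m, hm⟩ : ∃ m : ℤ, ∀ z ≤ x, m ≤ xi0 η z := by
    have hbd := ((Finset.Icc b x).image (xi0 η)).bddBelow
    obtain ⟨m, hm⟩ := hbd
    refine ⟨min m (xi0 η x), fun z hz => ?_⟩
    by_cases hzb : z ≤ b
    · exact (min_le_right _ _).trans (hb z hzb).le
    · refine (min_le_left _ _).trans (hm ?_)
      simp only [Finset.coe_image]
      exact ⟨z, by simp; omega, rfl⟩
  obtain ⟨u, hu⟩ := h.1 (m - 1)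
  obtain ⟨y, hy, hmin⟩ := Int.exists_least_of_bdd (P := fun y => xi0 η y ≤ m - 1)
    ⟨x, fun z hz => by by_contra hh; have := hm z (by omega); omega⟩ ⟨u, hu⟩
  refine ⟨y, ?_, (isRecord_iff η y).2 fun z hz => ?_⟩
  · by_contra hh
    have := hm y (by omega)
    omega
  · by_contra hh
    have := hmin z (by omega)
    omega

lemma good_next {η : Cfg} (h : GoodC η) (x : ℤ) :
    ∃ y, x < y ∧ isRecord η y ∧ ∀ z, x < z → isRecord η z → y ≤ z := by
  obtain ⟨u, hu⟩ := good_exists_ge h x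
  obtain ⟨y, hy, hmin⟩ := Int.exists_least_of_bdd (P := fun y => x < y ∧ isRecord η y)
    ⟨x, fun z hz => by have := hz.1; omega⟩ ⟨u, hu⟩
  exact ⟨y, hy.1, hy.2, fun z hz hz' => hmin z ⟨hz, hz'⟩⟩

lemma good_prev {η : Cfg} (h : GoodC η) (x : ℤ) :
    ∃ y, y ≤ x ∧ isRecord η y ∧ ∀ z, z ≤ x → isRecord η z → z ≤ y := by
  obtain ⟨u, hu⟩ := good_exists_le h x
  obtain ⟨y, hy, hmin⟩ := Int.exists_greatest_of_bdd (P := fun y => y ≤ x ∧ isRecord η y)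
    ⟨x, fun z hz => hz.1⟩ ⟨u, hu⟩
  exact ⟨y, hy.1, hy.2, fun z hz hz' => hmin z ⟨hz, hz'⟩⟩

lemma good_consec {η : Cfg} (h : GoodC η) {x : ℤ} (hx : ¬ isRecord η x) :
    ∃ y1 y2, Consec η y1 y2 ∧ y1 < x ∧ x < y2 := by
  obtain ⟨y1, a1, a2, a3⟩ := good_prev h x
  obtain ⟨y2, b1, b2, b3⟩ := good_next h x
  have : y1 ≠ x := by rintro rfl; exact hx a2
  refine ⟨y1, y2, ⟨by omega, a2, b2, fun z hz hz' hr => ?_⟩, by omega, b1⟩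
  rcases le_or_gt z x with hzx | hzx
  · have := a3 z hzx hr; omega
  · have := b3 z hzx hr; omega

lemma good_rFirst {η : Cfg} (h : GoodC η) :
    0 < rFirst η ∧ isRecord η (rFirst η) ∧ ∀ z, 0 < z → isRecord η z → rFirst η ≤ z := by
  obtain ⟨y, b1, b2, b3⟩ := good_next h 0
  have : rFirst η = y := by
    apply le_antisymm
    · exact csInf_le ⟨0, fun z hz => by have := hz.1; omega⟩ ⟨by omega, b2⟩
    · exact le_csInf ⟨y, by omega, b2⟩ fun z hz => b3 z (by have := hz.1; omega) hz.2
  rw [this]; exact ⟨b1, b2, b3⟩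

/-! ### Mass transport -/

/-- `x` is the starting site of a `k`-soliton -/
def St (η : Cfg) (k : ℕ) (x : ℤ) : Prop := ∃ γ ∈ Gamma η k, leftmost γ = x

def InSol (η : Cfg) (k : ℕ) (x y : ℤ) : Prop := ∃ γ ∈ Gamma η k, leftmost γ = x ∧ y ∈ γ

def Und (η : Cfg) (k : ℕ) (r x : ℤ) : Prop :=
  isRecord η r ∧ St η k x ∧ r < x ∧ ∀ z, r < z ∧ z ≤ x → ¬ isRecord η z

lemma meas_St (k : ℕ) (x : ℤ) : MeasurableSet {η : Cfg | St η k x} :=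
  mE fun γ => mAnd (meas_Gamma k γ) mC

lemma meas_InSol (k : ℕ) (x y : ℤ) : MeasurableSet {η : Cfg | InSol η k x y} :=
  mE fun γ => mAnd (meas_Gamma k γ) mC

lemma meas_Und (k : ℕ) (r x : ℤ) : MeasurableSet {η : Cfg | Und η k r x} := by
  refine mAnd (meas_record r) (mAnd (meas_St k x) (mAnd mC (mA fun z => ?_)))
  by_cases h : r < z ∧ z ≤ x
  · simp only [h, and_self, true_imp_iff]; exact mNot (meas_record z)
  · simp only [h, false_imp_iff]; exact mC

lemma InSol_shift_aux {n : ℤ} {η : Cfg} {k : ℕ} {x y : ℤ} (h : InSol (shiftBy n η) k x y) :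
    InSol η k (x + n) (y + n) := by
  obtain ⟨γ, h1, h2, h3⟩ := h
  refine ⟨tr n γ, Gamma_shift.1 h1, ?_, mem_tr.2 (by simpa using h3)⟩
  rw [leftmost_tr (Gamma_nonempty h1), h2]

lemma InSol_shift (n : ℤ) (η : Cfg) (k : ℕ) (x y : ℤ) :
    InSol (shiftBy n η) k x y ↔ InSol η k (x + n) (y + n) := by
  refine ⟨InSol_shift_aux, fun h => ?_⟩
  rw [← shiftBy_shiftBy n η] at h
  simpa using InSol_shift_aux h

lemma St_iff {η : Cfg} {k : ℕ} {x : ℤ} : St η k x ↔ InSol η k x x := by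
  constructor
  · rintro ⟨γ, h, rfl⟩; exact ⟨γ, h, rfl, leftmost_mem (Gamma_nonempty h)⟩
  · rintro ⟨γ, h, h1, _⟩; exact ⟨γ, h, h1⟩

lemma St_shift (n : ℤ) (η : Cfg) (k : ℕ) (x : ℤ) :
    St (shiftBy n η) k x ↔ St η k (x + n) := by
  rw [St_iff, St_iff, InSol_shift]

lemma Und_shift_aux {n : ℤ} {η : Cfg} {k : ℕ} {r x : ℤ} (h : Und (shiftBy n η) k r x) :
    Und η k (r + n) (x + n) := by
  obtain ⟨h1, h2, h3, h4⟩ := h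
  refine ⟨(isRecord_shift _ _ _).1 h1, (St_shift _ _ _ _).1 h2, by omega, fun z hz hr => ?_⟩
  exact h4 (z - n) (by omega) ((isRecord_shift _ _ _).2 (by simpa using hr))

lemma Und_shift (n : ℤ) (η : Cfg) (k : ℕ) (x y : ℤ) :
    Und (shiftBy n η) k x y ↔ Und η k (x + n) (y + n) := by
  refine ⟨Und_shift_aux, fun h => ?_⟩
  rw [← shiftBy_shiftBy n η] at h
  simpa using Und_shift_aux h

lemma mu_shift {mu : Measure Cfg} (h : MeasurePreserving shiftC mu mu) (n : ℤ) {P : Cfg → Prop}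
    (hP : MeasurableSet {η | P η}) : mu {η | P (shiftBy n η)} = mu {η | P η} :=
  (mp_shift mu h n).measure_preimage hP.nullMeasurableSet

lemma mass_transport {mu : Measure Cfg} (h : MeasurePreserving shiftC mu mu)
    (F : Cfg → ℤ → ℤ → Prop) (hm : ∀ x y, MeasurableSet {η | F η x y})
    (hs : ∀ n η x y, F (shiftBy n η) x y ↔ F η (x + n) (y + n)) :
    ∑' y, mu {η | F η 0 y} = ∑' y, mu {η | F η y 0} := by
  rw [← (Equiv.neg ℤ).tsum_eq]
  refine tsum_congr fun y => ?_
  have := mu_shift h (-y) (hm y 0)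
  simp only [hs] at this
  simpa using this

lemma tsum_ind (S : Set ℤ) (hS : S.Finite) :
    ∑' x, S.indicator (fun _ => (1 : ENNReal)) x = (S.ncard : ENNReal) := by
  rw [tsum_eq_sum (s := hS.toFinset)]
  · rw [Finset.sum_congr rfl (g := fun _ => (1 : ENNReal))]
    · rw [Set.ncard_eq_toFinset_card S hS]; simp
    · intro x hx
      exact Set.indicator_of_mem (by simpa using hx) _
  · intro x hx
    exact Set.indicator_of_notMem (by simpa using hx) _

lemma InSol_unique {η : Cfg} {k k' : ℕ} {x x' y : ℤ} (h : InSol η k x y) (h' : InSol η k' x' y) :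
    x = x' ∧ k = k' := by
  obtain ⟨γ, h1, h2, h3⟩ := h
  obtain ⟨γ', h1', h2', h3'⟩ := h'
  obtain ⟨rfl, rfl⟩ := Gamma_eq_of_mem h1 h1' h3 h3'
  exact ⟨by rw [← h2, ← h2'], rfl⟩

lemma lint_tsum (mu : Measure Cfg) (F : Cfg → ℤ → Prop) (hm : ∀ y, MeasurableSet {η | F η y}) :
    ∫⁻ η, ∑' y, {y | F η y}.indicator (fun _ => (1 : ENNReal)) y ∂mu = ∑' y, mu {η | F η y} := by
  have : ∀ η y, {y | F η y}.indicator (fun _ => (1 : ENNReal)) y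
      = {η | F η y}.indicator (fun _ => (1 : ENNReal)) η := fun η y => rfl
  simp only [this]
  rw [lintegral_tsum]
  · refine tsum_congr fun y => ?_
    rw [lintegral_indicator (hm y)]; simp
  · exact fun y => (measurable_const.indicator (hm y)).aemeasurable

lemma lint_meas (F : Cfg → ℤ → Prop) (hm : ∀ y, MeasurableSet {η | F η y}) :
    Measurable fun η => ∑' y, {y | F η y}.indicator (fun _ => (1 : ENNReal)) y := by
  refine Measurable.ennreal_tsum fun y => ?_
  exact measurable_const.indicator (hm y)

/-- probability that the origin is the start of a `k`-soliton -/
noncomputable def pk (mu : Measure Cfg) (k : ℕ) : ENNReal := mu {η | St η k 0}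

lemma cover_k {mu : Measure Cfg} (h : MeasurePreserving shiftC mu mu) (k : ℕ) :
    mu {η | ∃ x, InSol η k x 0} = 2 * k * pk mu k := by
  have h1 := mass_transport h (fun η x y => InSol η k x y) (meas_InSol k)
    (fun n η x y => InSol_shift n η k x y)
  have h2 : mu {η | ∃ x, InSol η k x 0} = ∑' y, mu {η | InSol η k y 0} := by
    rw [← measure_iUnion]
    · congr 1; ext η; simp
    · intro x y hxy
      refine Set.disjoint_left.2 fun η hx hy => hxy (InSol_unique hx hy).1
    · exact fun y => meas_InSol k y 0
  rw [h2, ← h1, ← lint_tsum mu (fun η y => InSol η k 0 y) (fun y => meas_InSol k 0 y)]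
  rw [pk, ← lintegral_indicator_one (meas_St k 0), ← lintegral_const_mul _
    (measurable_one.indicator (meas_St k 0))]
  congr 1; funext η
  by_cases hst : St η k 0
  · obtain ⟨γ, hγ, hl⟩ := hst
    have e : {y | InSol η k 0 y} = (γ : Set ℤ) := by
      ext y
      constructor
      · rintro ⟨γ', a, b, c⟩
        have m1 := leftmost_mem (Gamma_nonempty hγ)
        have m2 := leftmost_mem (Gamma_nonempty a)
        rw [hl] at m1; rw [b] at m2
        obtain ⟨rfl, _⟩ := Gamma_eq_of_mem hγ a m1 m2
        exact c
      · intro hy; exact ⟨γ, hγ, hl, hy⟩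
    rw [e, tsum_ind _ γ.finite_toSet, Set.ncard_coe_finset, Gamma_card hγ,
      Set.indicator_of_mem (show η ∈ {η | St η k 0} from ⟨γ, hγ, hl⟩)]
    simp
  · have e : {y | InSol η k 0 y} = ∅ := by
      ext y
      simp only [Set.mem_empty_iff_false, iff_false]
      rintro ⟨γ', a, b, c⟩
      exact hst ⟨γ', a, b⟩
    rw [e, Set.indicator_of_notMem (show η ∉ {η | St η k 0} from hst)]
    simp

noncomputable def rec0 (mu : Measure Cfg) : ENNReal := mu {η | isRecord η 0}

lemma total {mu : Measure Cfg} [IsProbabilityMeasure mu] (h : MeasurePreserving shiftC mu mu)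
    (hg : ∀ᵐ η ∂mu, GoodC η) : rec0 mu + ∑' k : ℕ, 2 * k * pk mu k = 1 := by
  simp only [← cover_k h]
  have hm : ∀ k : ℕ, MeasurableSet {η | ∃ x, InSol η k x 0} := fun k => mE fun x => meas_InSol k x 0
  rw [← measure_iUnion _ hm, rec0, ← measure_union _ (MeasurableSet.iUnion hm)]
  · rw [← measure_univ (μ := mu)]
    apply measure_congr
    filter_upwards [hg] with η hη
    apply propext
    show (isRecord η 0 ∨ η ∈ _) ↔ True
    simp only [Set.mem_iUnion, iff_true]
    by_cases hr : isRecord η 0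
    · exact Or.inl hr
    · obtain ⟨y1, y2, hc, a, b⟩ := good_consec hη hr
      obtain ⟨k, γ, hγ, hx⟩ := Gamma_cover hc a b
      exact Or.inr ⟨k, leftmost γ, γ, hγ, rfl, hx⟩
  · refine Set.disjoint_left.2 fun η hr hu => ?_
    obtain ⟨k, x, γ, hγ, _, hx⟩ := Set.mem_iUnion.1 hu
    obtain ⟨y1, y2, s, hd⟩ := Gamma_data hγ
    have := hd.range hx
    exact hd.con.2.2.2 0 this.1 this.2 hr
  · intro k k' hk
    refine Set.disjoint_left.2 fun η ⟨x, hx⟩ ⟨x', hx'⟩ => hk (InSol_unique hx hx').2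

lemma und_sum {mu : Measure Cfg} (h : MeasurePreserving shiftC mu mu)
    (hg : ∀ᵐ η ∂mu, GoodC η) (k : ℕ) : ∑' y, mu {η | Und η k 0 y} = pk mu k := by
  rw [mass_transport h (fun η x y => Und η k x y) (meas_Und k) (fun n η x y => Und_shift n η k x y),
    ← measure_iUnion]
  · apply measure_congr
    filter_upwards [hg] with η hη
    apply propext
    show (η ∈ ⋃ r, {η | Und η k r 0}) ↔ St η k 0
    simp only [Set.mem_iUnion]
    constructor
    · rintro ⟨r, hr⟩; exact hr.2.1
    · rintro ⟨γ, hγ, hl⟩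
      obtain ⟨y1, y2, s, hd⟩ := Gamma_data hγ
      have hx := leftmost_mem (Gamma_nonempty hγ)
      rw [hl] at hx
      have := hd.range hx
      exact ⟨y1, hd.con.2.1, ⟨γ, hγ, hl⟩, this.1, fun z hz => hd.con.2.2.2 z hz.1 (by omega)⟩
  · intro r r' hr
    refine Set.disjoint_left.2 fun η hx hy => ?_
    obtain ⟨a1, a2, a3, a4⟩ := hx
    obtain ⟨b1, b2, b3, b4⟩ := hy
    rcases lt_trichotomy r r' with hlt | rfl | hlt
    · exact a4 r' ⟨hlt, by omega⟩ b1
    · exact hr rfl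
    · exact b4 r ⟨hlt, by omega⟩ a1
  · exact fun y => meas_Und k y 0

lemma excCount_eq {η : Cfg} (hη : GoodC η) (hr : isRecord η 0) (k : ℕ) :
    ∑' y, {y | Und η k 0 y}.indicator (fun _ => (1 : ENNReal)) y = (excCount η k : ENNReal) := by
  obtain ⟨f1, f2, f3⟩ := good_rFirst hη
  have hfin : {y | Und η k 0 y}.Finite := by
    refine (Set.finite_Icc (0:ℤ) (rFirst η)).subset ?_
    rintro y ⟨_, _, b, c⟩
    refine ⟨b.le, ?_⟩
    by_contra hh
    exact c (rFirst η) ⟨f1, by omega⟩ f2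
  rw [tsum_ind _ hfin, excCount]
  have e : {y | Und η k 0 y} = leftmost '' {γ | γ ∈ Gamma η k ∧ ∀ x ∈ γ, 0 < x ∧ x < rFirst η} := by
    ext y
    constructor
    · rintro ⟨_, ⟨γ, hγ, hl⟩, b, c⟩
      refine ⟨γ, ⟨hγ, ?_⟩, hl⟩
      obtain ⟨y1, y2, s, hd⟩ := Gamma_data hγ
      have hx := leftmost_mem (Gamma_nonempty hγ)
      rw [hl] at hx
      have hy := hd.range hx
      have h1 : 0 ≤ y1 := by
        by_contra hh
        exact hd.con.2.2.2 0 (by omega) (by omega) hr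
      have h2 : y2 ≤ rFirst η := by
        by_contra hh
        rcases le_or_gt (rFirst η) y with h3 | h3
        · exact c _ ⟨f1, h3⟩ f2
        · exact hd.con.2.2.2 (rFirst η) (by omega) (by omega) f2
      intro x hx
      have := hd.range hx
      omega
    · rintro ⟨γ, ⟨hγ, hc⟩, hl⟩
      have hx := leftmost_mem (Gamma_nonempty hγ)
      rw [hl] at hx
      have := hc y hx
      refine ⟨hr, ⟨γ, hγ, hl⟩, this.1, fun z hz hrz => ?_⟩
      have := f3 z hz.1 hrz
      omega
  rw [e, Set.ncard_image_of_injOn]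
  intro γ hγ γ' hγ' he
  have m1 := leftmost_mem (Gamma_nonempty hγ.1)
  have m2 := leftmost_mem (Gamma_nonempty hγ'.1)
  rw [he] at m1
  exact (Gamma_eq_of_mem hγ.1 hγ'.1 m1 m2).1

lemma rhoK_eq {mu : Measure Cfg} [IsProbabilityMeasure mu] (h : MeasurePreserving shiftC mu mu)
    (hX : ∀ᵐ η ∂mu, inX η) (hg : ∀ᵐ η ∂mu, GoodC η) (k : ℕ) :
    rhoK mu k = (pk mu k).toReal / (rec0 mu).toReal := by
  have hset : XhatSet =ᵐ[mu] {η : Cfg | isRecord η 0} := by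
    filter_upwards [hX] with η hη
    apply propext
    exact ⟨fun hh => hh.2, fun hh => ⟨hη, hh⟩⟩
  have hcond : ProbabilityTheory.cond mu XhatSet =
      (rec0 mu)⁻¹ • mu.restrict {η | isRecord η 0} := by
    rw [ProbabilityTheory.cond, Measure.restrict_congr_set hset, measure_congr hset]; rfl
  rw [rhoK, hcond, integral_smul_measure]
  have hae : ∀ᵐ η ∂(mu.restrict {η | isRecord η 0}), GoodC η ∧ isRecord η 0 :=
    (ae_restrict_of_ae hg).and (ae_restrict_mem (meas_record 0))
  have e1 : ∫ η, (excCount η k : ℝ) ∂(mu.restrict {η | isRecord η 0}) =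
      ∫ η, (∑' y, {y | Und η k 0 y}.indicator (fun _ => (1 : ENNReal)) y).toReal
        ∂(mu.restrict {η | isRecord η 0}) := by
    apply integral_congr_ae
    filter_upwards [hae] with η hη
    rw [excCount_eq hη.1 hη.2]; simp
  rw [e1, integral_toReal (lint_meas _ (fun y => meas_Und k 0 y)).aemeasurable]
  · rw [lint_tsum _ _ (fun y => meas_Und k 0 y)]
    have e2 : ∀ y, (mu.restrict {η | isRecord η 0}) {η | Und η k 0 y} = mu {η | Und η k 0 y} := by
      intro y
      rw [Measure.restrict_apply (meas_Und k 0 y)]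
      congr 1
      ext η
      exact ⟨fun hh => hh.1, fun hh => ⟨hh, hh.1⟩⟩
    simp only [e2, und_sum h hg]
    rw [ENNReal.toReal_inv, smul_eq_mul]; ring
  · filter_upwards [hae] with η hη
    rw [excCount_eq hη.1 hη.2]; simp

lemma ratio_eq {mu : Measure Cfg} [IsProbabilityMeasure mu] (h : MeasurePreserving shiftC mu mu)
    (hX : ∀ᵐ η ∂mu, inX η) (hg : ∀ᵐ η ∂mu, GoodC η) (k : ℕ) (hk : 0 < rhoK mu k) :
    0 < (pk mu k).toReal ∧ w0of mu / rhoK mu k = 1 / (pk mu k).toReal := by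
  have hr : 0 < (rec0 mu).toReal := by
    rcases (ENNReal.toReal_nonneg (a := rec0 mu)).eq_or_lt with h0 | h0
    · rw [rhoK_eq h hX hg, ← h0] at hk; simp at hk
    · exact h0
  have hp : 0 < (pk mu k).toReal := by
    rw [rhoK_eq h hX hg] at hk
    rcases (ENNReal.toReal_nonneg (a := pk mu k)).eq_or_lt with h0 | h0
    · rw [← h0] at hk; simp at hk
    · exact h0
  refine ⟨hp, ?_⟩
  have ht := total h hg
  have hle : ∑' k : ℕ, 2 * k * pk mu k ≤ 1 := by rw [← ht]; exact le_add_self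
  have hne : ∑' k : ℕ, 2 * k * pk mu k ≠ ⊤ := ne_top_of_le_ne_top (by simp) hle
  have h2 : (rec0 mu).toReal + ∑' k : ℕ, 2 * (k:ℝ) * (pk mu k).toReal = 1 := by
    have := congrArg ENNReal.toReal ht
    rw [ENNReal.toReal_add (show rec0 mu ≠ ⊤ from measure_ne_top mu _) hne, ENNReal.tsum_toReal_eq] at this
    · simpa using this
    · exact fun k => ENNReal.ne_top_of_tsum_ne_top hne k
  have h3 : w0of mu = 1 / (rec0 mu).toReal := by
    unfold w0of
    simp only [rhoK_eq h hX hg]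
    simp only [← mul_div_assoc]
    rw [tsum_div_const]
    field_simp
    linarith
  rw [h3, rhoK_eq h hX hg]
  field_simp

/-! ### The speed bound -/

def Fast (v' : ℝ) (k N : ℕ) (η : Cfg) (x : ℤ) : Prop :=
  ∃ γ ∈ Gamma η k, leftmost γ = x ∧ ∃ γ', solTraj η k γ N = γ' ∧ γ'.Nonempty ∧
    (x : ℝ) + v' * N ≤ (leftmost γ' : ℝ)

lemma meas_Fast (v' : ℝ) (k N : ℕ) (x : ℤ) : MeasurableSet {η | Fast v' k N η x} :=
  mE fun γ => mAnd (meas_Gamma k γ) (mAnd mC (mE fun γ' => mAnd (meas_traj k N γ γ') mC))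

lemma Fast_shift_aux {v' : ℝ} {k N : ℕ} {n : ℤ} {η : Cfg} {x : ℤ}
    (h : Fast v' k N (shiftBy n η) x) : Fast v' k N η (x + n) := by
  obtain ⟨γ, h1, h2, γ', h3, h4, h5⟩ := h
  refine ⟨tr n γ, Gamma_shift.1 h1, ?_, tr n γ', ?_, h4.image _, ?_⟩
  · rw [leftmost_tr (Gamma_nonempty h1), h2]
  · rw [solTraj_tr, h3]
  · rw [leftmost_tr h4]; push_cast; linarith

lemma Fast_shift (v' : ℝ) (k N : ℕ) (n : ℤ) (η : Cfg) (x : ℤ) :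
    Fast v' k N (shiftBy n η) x ↔ Fast v' k N η (x + n) := by
  refine ⟨Fast_shift_aux, fun h => ?_⟩
  rw [← shiftBy_shiftBy n η] at h
  simpa using Fast_shift_aux h

lemma fast_bound {mu : Measure Cfg} [IsProbabilityMeasure mu] (h : MeasurePreserving shiftC mu mu)
    {v' : ℝ} (hv' : 0 < v') {k : ℕ}
    (hall : ∀ᵐ η ∂mu, ∀ γ ∈ Gamma η k, ∀ t, solTraj η k γ t ∈ Gamma (bbsT^[t] η) k) (N : ℕ) :
    (⌊v' * N⌋₊ : ENNReal) * mu {η | Fast v' k N η 0} ≤ N := by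
  set L := ⌊v' * N⌋₊ with hL
  have hLv : (L : ℝ) ≤ v' * N := Nat.floor_le (by positivity)
  have e : ∀ x, mu {η | Fast v' k N η x} = mu {η | Fast v' k N η 0} := by
    intro x
    rw [← mu_shift h x (meas_Fast v' k N 0)]
    simp only [Fast_shift, zero_add]
  have e2 : (L : ENNReal) * mu {η | Fast v' k N η 0} =
      ∑ x ∈ Finset.Ico (-(L:ℤ)) 0, mu {η | Fast v' k N η x} := by
    simp only [e]; simp
  rw [e2]
  have e3 : ∀ x, mu {η | Fast v' k N η x} =
      ∫⁻ η, {η | Fast v' k N η x}.indicator 1 η ∂mu := fun x =>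
    (lintegral_indicator_one (meas_Fast v' k N x)).symm
  simp only [e3]
  rw [← lintegral_finsetSum _ fun x _ => measurable_one.indicator (meas_Fast v' k N x)]
  calc _ ≤ ∫⁻ η, (N : ENNReal) ∂mu := by
        apply lintegral_mono_ae
        filter_upwards [hall] with η hη
        classical
        have : ∑ x ∈ Finset.Ico (-(L:ℤ)) 0, {η | Fast v' k N η x}.indicator (1 : Cfg → ENNReal) η =
            (((Finset.Ico (-(L:ℤ)) 0).filter fun x => Fast v' k N η x).card : ENNReal) := by
          rw [Finset.card_filter]
          push_cast
          refine Finset.sum_congr rfl fun x _ => ?_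
          simp only [Set.indicator]
          rfl
        rw [this]
        refine Nat.cast_le.2 (count_le hη _ fun x hx => ?_)
        obtain ⟨hx1, hx2⟩ := Finset.mem_filter.1 hx
        obtain ⟨γ, h1, h2, γ', h3, h4, h5⟩ := hx2
        rw [Finset.mem_Ico] at hx1
        refine ⟨hx1.2, γ, h1, h2, ?_⟩
        rw [h3]
        have : (-(L:ℝ)) ≤ x := by exact_mod_cast hx1.1
        have : (0:ℝ) ≤ leftmost γ' := by linarith
        exact_mod_cast this
    _ = N := by simp

lemma fast_tendsto {mu : Measure Cfg} [IsProbabilityMeasure mu] {v v' : ℝ} (hvv : v' < v) {k : ℕ}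
    (hall : ∀ᵐ η ∂mu, ∀ γ ∈ Gamma η k, ∀ t, solTraj η k γ t ∈ Gamma (bbsT^[t] η) k)
    (hlim : ∀ᵐ η ∂mu, ∀ γ ∈ Gamma η k,
      Tendsto (fun t : ℕ => (leftmost (solTraj η k γ t) : ℝ) / (t : ℝ)) atTop (nhds v)) :
    Tendsto (fun N => mu {η | Fast v' k N η 0}) atTop (nhds (pk mu k)) := by
  refine tendsto_measure_of_ae_tendsto_indicator_of_isFiniteMeasure atTop (meas_St k 0)
    (fun N => meas_Fast v' k N 0) ?_
  filter_upwards [hall, hlim] with η h1 h2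
  by_cases hst : St η k 0
  · obtain ⟨γ, hγ, hl⟩ := hst
    filter_upwards [(h2 γ hγ).eventually (eventually_gt_nhds hvv), eventually_gt_atTop 0] with N hN hN0
    refine ⟨fun _ => ⟨γ, hγ, hl⟩, fun _ => ⟨γ, hγ, hl, _, rfl, Gamma_nonempty (h1 γ hγ N), ?_⟩⟩
    have : (0:ℝ) < N := by exact_mod_cast hN0
    rw [lt_div_iff₀ this] at hN
    simpa using hN.le
  · refine Eventually.of_forall fun N => ⟨fun hh => ?_, fun hh => absurd hh hst⟩
    obtain ⟨γ, hγ, hl, _⟩ := hh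
    exact absurd ⟨γ, hγ, hl⟩ hst

lemma speed_le {mu : Measure Cfg} [IsProbabilityMeasure mu] (h : MeasurePreserving shiftC mu mu)
    {v v' : ℝ} (hv' : 0 < v') (hvv : v' < v) {k : ℕ}
    (hall : ∀ᵐ η ∂mu, ∀ γ ∈ Gamma η k, ∀ t, solTraj η k γ t ∈ Gamma (bbsT^[t] η) k)
    (hlim : ∀ᵐ η ∂mu, ∀ γ ∈ Gamma η k,
      Tendsto (fun t : ℕ => (leftmost (solTraj η k γ t) : ℝ) / (t : ℝ)) atTop (nhds v)) :
    v' * (pk mu k).toReal ≤ 1 := by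
  have ht := (ENNReal.tendsto_toReal (show pk mu k ≠ ⊤ from measure_ne_top mu _)).comp
    (fast_tendsto hvv hall hlim)
  have hb : Tendsto (fun N : ℕ => (⌊v' * N⌋₊ : ℝ) / (N : ℝ)) atTop (nhds v') :=
    (tendsto_nat_floor_mul_div_atTop hv'.le).comp tendsto_natCast_atTop_atTop
  refine le_of_tendsto (hb.mul ht) ?_
  filter_upwards [eventually_gt_atTop 0] with N hN
  have hN' : (0:ℝ) < N := by exact_mod_cast hN
  have h1 := ENNReal.toReal_mono (by simp) (fast_bound h hv' hall N)
  rw [ENNReal.toReal_mul] at h1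
  simp only [ENNReal.toReal_natCast] at h1
  rw [div_mul_eq_mul_div, div_le_one hN']
  exact h1

open MeasureTheory Filter in
/-- **finiteness bound for speeds.** Let `μ` be a `T`-invariant,
shift-ergodic probability measure on `𝒳_λ`, `0 < λ < 1/2`, and let `(v_k)` be
the deterministic asymptotic speeds of tagged `k`-solitons,
`v_k = lim_t x(γ^t)/t` `μ`-a.s.  Then for every `k ≥ 1` with `ρ_k > 0`,
`v_k ≤ w_0 / ρ_k`; in particular each such `v_k` is finite. -/
theorem soliton_speed_bound (lam : ℝ) (h0 : 0 < lam) (h1 : lam < 1 / 2)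
    (mu : Measure Cfg) [IsProbabilityMeasure mu]
    (hsupp : mu {η : Cfg | inXlam lam η} = 1)
    (hT : mu.map bbsT = mu) (herg : Ergodic shiftC mu) (v : ℕ → ℝ)
    (hv : ∀ᵐ η ∂mu, ∀ k : ℕ, 1 ≤ k → ∀ γ ∈ Gamma η k,
      Tendsto (fun t : ℕ => (leftmost (solTraj η k γ t) : ℝ) / (t : ℝ))
        atTop (nhds (v k))) :
    ∀ k : ℕ, 1 ≤ k → 0 < rhoK mu k → v k ≤ w0of mu / rhoK mu k := by
  intro k hk hrho
  have h := herg.toMeasurePreserving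
  have hae : ∀ᵐ η ∂mu, inXlam lam η := by
    rw [← measure_univ (μ := mu)] at hsupp
    exact (ae_iff_measure_eq (meas_inXlam lam).nullMeasurableSet).2 hsupp
  have hX : ∀ᵐ η ∂mu, inX η := hae.mono fun η hη => ⟨lam, h0, h1, hη⟩
  have hg : ∀ᵐ η ∂mu, GoodC η := hae.mono fun η hη => good_of_density h1 hη
  obtain ⟨hp, he⟩ := ratio_eq h hX hg k hrho
  rw [he]
  rcases le_or_gt (v k) 0 with hv0 | hv0
  · exact hv0.trans (by positivity)
  have hlim : ∀ᵐ η ∂mu, ∀ γ ∈ Gamma η k,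
      Tendsto (fun t : ℕ => (leftmost (solTraj η k γ t) : ℝ) / (t : ℝ)) atTop (nhds (v k)) :=
    hv.mono fun η hη => hη k hk
  have hall : ∀ᵐ η ∂mu, ∀ γ ∈ Gamma η k, ∀ t, solTraj η k γ t ∈ Gamma (bbsT^[t] η) k :=
    hlim.mono fun η hη γ hγ t => solTraj_mem hγ hv0.ne' (hη γ hγ) t
  refine le_of_forall_lt fun c hc => ?_
  have hm : max c 0 < v k := max_lt hc hv0
  obtain ⟨v', a, b⟩ := exists_between hm
  have hv' : 0 < v' := (le_max_right _ _).trans_lt a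
  have := speed_le h hv' b hall hlim
  refine ((le_max_left _ _).trans_lt a).trans_le ?_
  rwa [le_div_iff₀ hp]
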